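/- arXiv:1910.07295 — 2 statements merged into one kernel-verified Lean document; each statement's English description precedes it below -/
import Mathlib

section
/- The doubly robust (DR) estimator is unbiased for the ideal loss for any imputation model: for every prediction matrix R̂ ∈ ℝ^{m×n} and every imputed-error matrix ℓ̂ ∈ ℝ^{m×n}, the expectation over the random observation matrix O of L̂_DR(R̂ | O) := (1/(mn)) Σ_{(u,i)∈D} { ℓ̂_{u,i} + O_{u,i} · (ℓ(R_{u,i}, R̂_{u,i}) − ℓ̂_{u,i}) / P_{u,i} } equals the ideal loss L^ℓ_ideal(R̂) = (1/(mn)) Σ_{(u,i)∈D} ℓ(R_{u,i}, R̂_{u,i}). -/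
theorem dr_marginal {ι : Type*} [Fintype ι] [DecidableEq ι] (w : ι → Bool → ℝ)
    (hw : ∀ p, ∑ b, w p b = 1) (q : ι) (f : Bool → ℝ) :
    ∑ O : ι → Bool, (∏ p, w p (O p)) * f (O q) = ∑ b, w q b * f b := by
  have h1 : ∀ O : ι → Bool, (∏ p, w p (O p)) * f (O q)
      = ∏ p, (w p (O p) * if p = q then f (O p) else 1) := by
    intro O
    rw [Finset.prod_mul_distrib, Finset.prod_ite_eq' Finset.univ q (fun p => f (O p))]
    simp
  have h2 := Finset.prod_univ_sum (fun _ : ι => (Finset.univ : Finset Bool))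
    (fun p b => w p b * if p = q then f b else 1)
  rw [Fintype.piFinset_univ] at h2
  rw [Finset.sum_congr rfl (fun O _ => h1 O), ← h2, Finset.prod_eq_single q]
  · simp
  · intro p _ hp
    simp only [hp, if_false, mul_one]
    exact hw p
  · simp

/-- **Unbiasedness of the doubly robust (DR) estimator.**
For every prediction matrix `R̂` and every imputed-error matrix `ℓ̂`, the
expectation over the random observation matrix `O` (mutually independent
Bernoulli entries, `O p ~ Bernoulli (P p)`) of the DR estimator
`(1/(mn)) Σ_p { ℓ̂ p + O p · (ℓ(R p, R̂ p) − ℓ̂ p) / P p }` equals the ideal loss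
`(1/(mn)) Σ_p ℓ(R p, R̂ p)`.  The expectation is written explicitly as a sum over
all realizations `O : D → Bool`, each weighted by its product-Bernoulli probability. -/
theorem dr_estimator_unbiased
    (m n : ℕ) (hm : 1 ≤ m) (hn : 1 ≤ n)
    (Δ : ℝ) (hΔ : 0 < Δ)
    (ℓ : ℝ → ℝ → ℝ) (hℓ : ∀ a b : ℝ, ℓ a b ∈ Set.Icc (0 : ℝ) Δ)
    (R Rhat : Fin m → Fin n → ℝ)
    (lhat : Fin m → Fin n → ℝ)
    (P : Fin m → Fin n → ℝ) (hP : ∀ u i, P u i ∈ Set.Ioc (0 : ℝ) 1) :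
    ∑ O : Fin m × Fin n → Bool,
        (∏ p : Fin m × Fin n, if O p then P p.1 p.2 else 1 - P p.1 p.2) *
          ((1 / (m * n : ℝ)) *
            ∑ p : Fin m × Fin n,
              (lhat p.1 p.2 +
                (if O p then (1 : ℝ) else 0) *
                  (ℓ (R p.1 p.2) (Rhat p.1 p.2) - lhat p.1 p.2) / P p.1 p.2)) =
      (1 / (m * n : ℝ)) * ∑ p : Fin m × Fin n, ℓ (R p.1 p.2) (Rhat p.1 p.2) := by
  have key : ∀ q : Fin m × Fin n,
      ∑ O : Fin m × Fin n → Bool,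
        (∏ p : Fin m × Fin n, if O p then P p.1 p.2 else 1 - P p.1 p.2) *
          (lhat q.1 q.2 + (if O q then (1 : ℝ) else 0) *
            (ℓ (R q.1 q.2) (Rhat q.1 q.2) - lhat q.1 q.2) / P q.1 q.2)
        = ℓ (R q.1 q.2) (Rhat q.1 q.2) := by
    intro q
    have h := dr_marginal
      (fun (p : Fin m × Fin n) (b : Bool) => if b then P p.1 p.2 else 1 - P p.1 p.2)
      (by intro p; simp) q
      (fun b => lhat q.1 q.2 + (if b then (1 : ℝ) else 0) *
            (ℓ (R q.1 q.2) (Rhat q.1 q.2) - lhat q.1 q.2) / P q.1 q.2)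
    refine h.trans ?_
    have hne : P q.1 q.2 ≠ 0 := (hP q.1 q.2).1.ne'
    simp only [Fintype.sum_bool, if_true, Bool.false_eq_true, if_false]
    field_simp
    ring
  simp_rw [mul_left_comm _ (1 / (m * n : ℝ)) _, ← Finset.mul_sum]
  congr 1
  simp_rw [Finset.mul_sum]
  rw [Finset.sum_comm]
  exact Finset.sum_congr rfl (fun q _ => key q)
end

section
/- Deviation bound for the propensity matrix divergence (Lemma 1): suppose L > 0 and ℓ is L-Lipschitz in each argument, i.e., |ℓ(a, b) − ℓ(a', b)| ≤ L|a − a'| and |ℓ(a, b) − ℓ(a, b')| ≤ L|b − b'| for all reals. Let H be a nonempty, uniformly bounded class of real m×n matrices, let P and P' be probability distributions on D, and let S and S' be independent i.i.d. samples of size M ≥ 1 from P and P' respectively, with empirical distributions P̂_S and P̂_{S'}. Then for every δ ∈ (0, 1), with probability at least 1 − δ, for every R̂ ∈ H: | ψ_{R̂,H}(P, P') − ψ_{R̂,H}(P̂_S, P̂_{S'}) | ≤ 4L ( R_{P,M}(H) + R_{P',M}(H) ) + Δ √( 2 log(4/δ) / M ). -/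
open scoped Classical

/-- Rademacher complexity of a class `F` of functions `D → ℝ` for i.i.d. samples of
size `M` from the distribution `P` on `D = Fin m × Fin n`:
`R_{P,M}(F) = E_S E_σ [ sup_{f∈F} (1/M) Σ_k σ_k · f (S k) ]`, where the expectation
over samples is the explicit finite sum weighted by the product probabilities and the
Rademacher signs `σ : Fin M → Bool` (`true ↦ +1`, `false ↦ -1`) are uniform. -/
noncomputable def rademacher {m n : ℕ} (M : ℕ) (P : Fin m × Fin n → ℝ)
    (F : Set (Fin m × Fin n → ℝ)) : ℝ :=
  ∑ S : Fin M → Fin m × Fin n, (∏ k : Fin M, P (S k)) *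
    ∑ σ : Fin M → Bool, ((1 : ℝ) / 2) ^ M *
      sSup ((fun f => (1 / (M : ℝ)) *
        ∑ k : Fin M, (if σ k then (1 : ℝ) else -1) * f (S k)) '' F)

/-- Rademacher complexity of a class `H` of real `m × n` matrices, i.e. of the
associated function class `{ (u,i) ↦ R̂ u i : R̂ ∈ H }`. -/
noncomputable def matRademacher {m n : ℕ} (M : ℕ) (P : Fin m × Fin n → ℝ)
    (H : Set (Fin m → Fin n → ℝ)) : ℝ :=
  rademacher M P ((fun Rh : Fin m → Fin n → ℝ => fun p : Fin m × Fin n => Rh p.1 p.2) '' H)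

/-- Probability of an event `E` over an i.i.d. sample `S : Fin M → D` drawn from the
distribution `P` on `D` (the `M`-fold product distribution, as an explicit finite sum). -/
noncomputable def prSample {m n : ℕ} (M : ℕ) (P : Fin m × Fin n → ℝ)
    (E : (Fin M → Fin m × Fin n) → Prop) : ℝ :=
  ∑ S : Fin M → Fin m × Fin n, if E S then ∏ k : Fin M, P (S k) else 0

/-- Probability of an event `E` over two independent i.i.d. samples of size `M`,
drawn from the distributions `P` and `P'` on `D` respectively. -/
noncomputable def prSample2 {m n : ℕ} (M : ℕ) (P P' : Fin m × Fin n → ℝ)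
    (E : (Fin M → Fin m × Fin n) → (Fin M → Fin m × Fin n) → Prop) : ℝ :=
  ∑ S : Fin M → Fin m × Fin n, ∑ S' : Fin M → Fin m × Fin n,
    if E S S' then (∏ k : Fin M, P (S k)) * (∏ k : Fin M, P' (S' k)) else 0

/-- Empirical distribution of a sample `S : Fin M → D`:
`P̂_S (p) = (1/M) · #{k : S k = p}`. -/
noncomputable def empDist {m n M : ℕ} (S : Fin M → Fin m × Fin n) :
    Fin m × Fin n → ℝ :=
  fun p => (1 / (M : ℝ)) * ((Finset.univ.filter (fun k : Fin M => S k = p)).card : ℝ)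

/-- Weighted loss `L^ℓ(A, B | P) = Σ_{(u,i)∈D} P (u,i) · ℓ(A u i, B u i)`. -/
noncomputable def wLoss {m n : ℕ} (ℓ : ℝ → ℝ → ℝ) (P : Fin m × Fin n → ℝ)
    (A B : Fin m → Fin n → ℝ) : ℝ :=
  ∑ p : Fin m × Fin n, P p * ℓ (A p.1 p.2) (B p.1 p.2)

/-- Propensity matrix divergence (PMD):
`ψ_{R̂,H}(P, P') = sup_{R̂'∈H} { L^ℓ(R̂, R̂' | P) − L^ℓ(R̂, R̂' | P') }`. -/
noncomputable def PMD {m n : ℕ} (ℓ : ℝ → ℝ → ℝ) (H : Set (Fin m → Fin n → ℝ))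
    (Rhat : Fin m → Fin n → ℝ) (P P' : Fin m × Fin n → ℝ) : ℝ :=
  sSup ((fun R' => wLoss ℓ P Rhat R' - wLoss ℓ P' Rhat R') '' H)

set_option linter.all false
namespace PMDaux

structure Subl {E : Type*} [AddCommGroup E] [Module ℝ E] (V : E → ℝ) : Prop where
  add : ∀ a b, V (a + b) ≤ V a + V b
  smul : ∀ (t : ℝ) (a : E), 0 ≤ t → V (t • a) = t * V a

section alg
variable {E : Type*} [AddCommGroup E] [Module ℝ E] {V : E → ℝ}

noncomputable def phi (V : E → ℝ) : AddMonoidAlgebra ℝ E →ₗ[ℝ] ℝ where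
  toFun μ := Finsupp.linearCombination ℝ V μ.coeff
  map_add' a b := by simp
  map_smul' a b := by simp

lemma phi_single (e : E) (c : ℝ) : phi V (AddMonoidAlgebra.single e c) = c * V e := by
  simp [phi]

noncomputable def X (e : E) : AddMonoidAlgebra ℝ E := AddMonoidAlgebra.single e 1

lemma X_add (a b : E) : X (a + b) = X a * X b := by
  simp [X, AddMonoidAlgebra.single_mul_single]

lemma X_zero : X (0 : E) = 1 := rfl

noncomputable def dl {β : Type*} [Fintype β] (Q : β → ℝ) (f : β → E) : AddMonoidAlgebra ℝ E :=
  ∑ b, Q b • X (f b)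

def LE' (V : E → ℝ) (μ ν : AddMonoidAlgebra ℝ E) : Prop :=
  ∀ b, phi V (X b * μ) ≤ phi V (X b * ν)

lemma LE'.phi_le {μ ν : AddMonoidAlgebra ℝ E} (h : LE' V μ ν) : phi V μ ≤ phi V ν := by
  simpa [X_zero] using h 0

lemma LE'.refl (μ : AddMonoidAlgebra ℝ E) : LE' V μ μ := fun _ => le_rfl

lemma LE'.trans {μ ν ρ : AddMonoidAlgebra ℝ E} (h : LE' V μ ν) (h' : LE' V ν ρ) : LE' V μ ρ :=
  fun b => (h b).trans (h' b)

def Pos (V : E → ℝ) (ν : AddMonoidAlgebra ℝ E) : Prop :=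
  ∀ μ μ', LE' V μ μ' → LE' V (ν * μ) (ν * μ')

lemma Pos.one : Pos V (1 : AddMonoidAlgebra ℝ E) := fun μ μ' h => by simpa using h

lemma Pos.mul {a b : AddMonoidAlgebra ℝ E} (ha : Pos V a) (hb : Pos V b) : Pos V (a * b) :=
  fun μ μ' h => by rw [mul_assoc, mul_assoc]; exact ha _ _ (hb _ _ h)

lemma Pos.add {a b : AddMonoidAlgebra ℝ E} (ha : Pos V a) (hb : Pos V b) : Pos V (a + b) :=
  fun μ μ' h c => by
    rw [add_mul, add_mul, mul_add, mul_add, map_add, map_add]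
    exact add_le_add (ha _ _ h c) (hb _ _ h c)

lemma Pos.smul {a : AddMonoidAlgebra ℝ E} (ha : Pos V a) {t : ℝ} (ht : 0 ≤ t) : Pos V (t • a) :=
  fun μ μ' h c => by
    rw [smul_mul_assoc, smul_mul_assoc, mul_smul_comm, mul_smul_comm, map_smul, map_smul]
    exact mul_le_mul_of_nonneg_left (ha _ _ h c) ht

lemma Pos.zero : Pos V (0 : AddMonoidAlgebra ℝ E) := fun μ μ' _ c => by simp

lemma Pos.X (e : E) : Pos V (X e) := fun μ μ' h c => by
  rw [← mul_assoc, ← mul_assoc, ← X_add]; exact h _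

lemma Pos.pow {a : AddMonoidAlgebra ℝ E} (ha : Pos V a) (n : ℕ) : Pos V (a ^ n) := by
  induction n with
  | zero => simpa using Pos.one
  | succ k ih => rw [pow_succ]; exact ih.mul ha

lemma Pos.sum {ι : Type*} (s : Finset ι) (f : ι → AddMonoidAlgebra ℝ E) (h : ∀ i ∈ s, Pos V (f i)) :
    Pos V (∑ i ∈ s, f i) := by
  induction s using Finset.induction_on with
  | empty => simpa using Pos.zero
  | insert a s ha ih =>
    rw [Finset.sum_insert ha]
    exact (h _ (by simp)).add (ih fun i hi => h i (by simp [hi]))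

lemma Pos.dl {β : Type*} [Fintype β] {Q : β → ℝ} (hQ : ∀ b, 0 ≤ Q b) (f : β → E) :
    Pos V (dl Q f) := Pos.sum _ _ fun i _ => (Pos.X _).smul (hQ i)

lemma LE'.mul {a a' b b' : AddMonoidAlgebra ℝ E} (ha : Pos V a) (hb : Pos V b')
    (h1 : LE' V a a') (h2 : LE' V b b') : LE' V (a * b) (a' * b') := by
  refine (ha _ _ h2).trans ?_
  rw [mul_comm a, mul_comm a']
  exact hb _ _ h1

lemma LE'.pow {a b : AddMonoidAlgebra ℝ E} (ha : Pos V a) (hb : Pos V b) (h : LE' V a b) (n : ℕ) :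
    LE' V (a ^ n) (b ^ n) := by
  induction n with
  | zero => simpa using LE'.refl _
  | succ k ih => rw [pow_succ, pow_succ]; exact LE'.mul (ha.pow k) hb ih h

/-- expectation over n iid samples -/
noncomputable def Ex {β : Type*} [Fintype β] (n : ℕ) (Q : β → ℝ) (F : (Fin n → β) → ℝ) : ℝ :=
  ∑ z : Fin n → β, (∏ k, Q (z k)) * F z

lemma X_sum {ι : Type*} (s : Finset ι) (f : ι → E) : X (∑ i ∈ s, f i) = ∏ i ∈ s, X (f i) := by
  induction s using Finset.induction_on with
  | empty => simp [X_zero]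
  | insert a s ha ih => rw [Finset.sum_insert ha, Finset.prod_insert ha, X_add, ih]

lemma prod_dl {β : Type*} [Fintype β] (n : ℕ) (Q : β → ℝ) (f : Fin n → β → E) :
    ∏ k, dl Q (f k) = ∑ z : Fin n → β, (∏ k, Q (z k)) • X (∑ k, f k (z k)) := by
  unfold dl
  rw [Finset.prod_univ_sum, Fintype.piFinset_univ]
  refine Finset.sum_congr rfl fun z _ => ?_
  rw [X_sum, Finset.prod_smul]

lemma phi_prod {β : Type*} [Fintype β] (n : ℕ) (Q : β → ℝ) (f : Fin n → β → E) (b : E) :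
    phi V (X b * ∏ k, dl Q (f k)) = Ex n Q (fun z => V (b + ∑ k, f k (z k))) := by
  rw [prod_dl, Finset.mul_sum, map_sum]
  refine Finset.sum_congr rfl fun z _ => ?_
  rw [mul_smul_comm, map_smul, ← X_add, X, phi_single]; simp

lemma phi_pow {β : Type*} [Fintype β] (n : ℕ) (Q : β → ℝ) (f : β → E) (b : E) :
    phi V (X b * dl Q f ^ n) = Ex n Q (fun z => V (b + ∑ k, f (z k))) := by
  rw [← phi_prod]; simp

lemma phi_dl {β : Type*} [Fintype β] (Q : β → ℝ) (f : β → E) (b : E) :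
    phi V (X b * dl Q f) = ∑ a, Q a * V (b + f a) := by
  rw [dl, Finset.mul_sum, map_sum]
  refine Finset.sum_congr rfl fun z _ => ?_
  rw [mul_smul_comm, map_smul, ← X_add, X, phi_single]; simp

lemma Ex_mono {β : Type*} [Fintype β] {n : ℕ} {Q : β → ℝ} (hQ : ∀ b, 0 ≤ Q b)
    {F G : (Fin n → β) → ℝ} (h : ∀ z, F z ≤ G z) : Ex n Q F ≤ Ex n Q G :=
  Finset.sum_le_sum fun z _ => mul_le_mul_of_nonneg_left (h z) (Finset.prod_nonneg fun k _ => hQ _)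

lemma Ex_add {β : Type*} [Fintype β] {n : ℕ} {Q : β → ℝ} (F G : (Fin n → β) → ℝ) :
    Ex n Q (fun z => F z + G z) = Ex n Q F + Ex n Q G := by
  simp [Ex, mul_add, Finset.sum_add_distrib]

lemma Ex_mul {β : Type*} [Fintype β] {n : ℕ} {Q : β → ℝ} (t : ℝ) (F : (Fin n → β) → ℝ) :
    Ex n Q (fun z => t * F z) = t * Ex n Q F := by
  simp only [Ex, Finset.mul_sum]
  exact Finset.sum_congr rfl fun z _ => by ring

lemma Ex_const {β : Type*} [Fintype β] {n : ℕ} {Q : β → ℝ} (hQ1 : ∑ b, Q b = 1) (t : ℝ) :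
    Ex n Q (fun _ => t) = t := by
  have : ∑ z : Fin n → β, ∏ k, Q (z k) = 1 := by
    rw [← Fintype.piFinset_univ, ← Finset.prod_univ_sum]; simp [hQ1]
  rw [Ex, ← Finset.sum_mul, this, one_mul]

lemma Subl.zero (hV : Subl V) : V 0 = 0 := by simpa using hV.smul 0 0 le_rfl

lemma Subl.sum (hV : Subl V) {ι : Type*} (s : Finset ι) (f : ι → E) :
    V (∑ i ∈ s, f i) ≤ ∑ i ∈ s, V (f i) := by
  induction s using Finset.induction_on with
  | empty => simp [hV.zero]
  | insert a s ha ih =>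
    rw [Finset.sum_insert ha, Finset.sum_insert ha]
    exact (hV.add _ _).trans (by linarith)

lemma jensen (hV : Subl V) {β : Type*} [Fintype β] {Q : β → ℝ} (hQ : ∀ b, 0 ≤ Q b)
    (hQ1 : ∑ b, Q b = 1) (f : β → E) : LE' V (X (∑ b, Q b • f b)) (dl Q f) := by
  intro b
  rw [phi_dl, ← X_add, X, phi_single, one_mul]
  have : b + ∑ a, Q a • f a = ∑ a, Q a • (b + f a) := by
    simp [smul_add, Finset.sum_add_distrib, ← Finset.sum_smul, hQ1]
  rw [this]
  refine (hV.sum _ _).trans (Finset.sum_le_sum fun a _ => ?_)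
  rw [hV.smul _ _ (hQ a)]

lemma phi_homog (hV : Subl V) {β : Type*} [Fintype β] (n : ℕ) (Q : β → ℝ) (f : β → E) (b : E)
    {t : ℝ} (ht : 0 ≤ t) :
    phi V (X (t • b) * dl Q (fun a => t • f a) ^ n) = t * phi V (X b * dl Q f ^ n) := by
  rw [phi_pow, phi_pow, ← Ex_mul]
  congr 1; ext z
  rw [← hV.smul _ _ ht, smul_add, Finset.smul_sum]

lemma exch (hV : Subl V) {β : Type*} [Fintype β] (n : ℕ) (hn : 0 < n) {Q : β → ℝ}
    (hQ : ∀ b, 0 ≤ Q b) (f : β → E) (c : Fin n → ℝ) :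
    LE' V (dl Q (fun a => ((∑ k, c k) / n) • f a) ^ n) (∏ k, dl Q (fun a => c k • f a)) := by
  intro b
  rw [phi_pow, phi_prod]
  haveI : NeZero n := ⟨hn.ne'⟩
  have hn' : (0:ℝ) < n := by exact_mod_cast hn
  have key : ∀ r : Fin n, Ex n Q (fun z => V (b + ∑ k, c k • f (z (k + r))))
      = Ex n Q (fun z => V (b + ∑ k, c k • f (z k))) := by
    intro r
    unfold Ex
    refine Fintype.sum_equiv (Equiv.arrowCongr (Equiv.addRight r).symm (Equiv.refl β)) _ _ ?_
    intro z
    simp only [Equiv.arrowCongr_apply, Equiv.coe_refl, Function.comp, id, Equiv.symm_symm,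
      Equiv.coe_addRight]
    congr 1
    exact (Fintype.prod_equiv (Equiv.addRight r) _ _ (fun k => rfl)).symm
  have h2 : (n:ℝ) * Ex n Q (fun z => V (b + ∑ k, ((∑ k, c k) / n) • f (z k))) ≤
      ∑ r : Fin n, Ex n Q (fun z => V (b + ∑ k, c k • f (z (k + r)))) := by
    have : ∑ r : Fin n, Ex n Q (fun z => V (b + ∑ k, c k • f (z (k + r)))) =
        Ex n Q (fun z => ∑ r : Fin n, V (b + ∑ k, c k • f (z (k + r)))) := by
      unfold Ex
      rw [Finset.sum_comm]
      simp [Finset.mul_sum]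
    rw [this, ← Ex_mul]
    refine Ex_mono hQ fun z => ?_
    rw [← hV.smul _ _ hn'.le]
    refine le_trans (le_of_eq ?_) (hV.sum _ _)
    congr 1
    rw [Finset.sum_add_distrib, Finset.sum_comm]
    simp only [← Finset.smul_sum]
    have : ∀ k : Fin n, ∑ r : Fin n, f (z (k + r)) = ∑ r, f (z r) := fun k =>
      Fintype.sum_equiv (Equiv.addLeft k) _ _ (fun _ => rfl)
    simp only [this, ← Finset.sum_smul, smul_add, smul_smul]
    simp only [Finset.sum_const, Finset.card_univ, Fintype.card_fin]
    congr 1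
    · exact Nat.cast_smul_eq_nsmul ℝ n b
    · congr 1; field_simp
  simp only [key] at h2
  simp only [Finset.sum_const, Finset.card_univ, Fintype.card_fin, nsmul_eq_mul] at h2
  exact le_of_mul_le_mul_left h2 hn'

lemma prod_two {A : Type*} [CommMonoid A] (n j : ℕ) (hj : j ≤ n) (a b : A) :
    ∏ k : Fin n, (if (k : ℕ) < j then a else b) = a ^ j * b ^ (n - j) := by
  rw [Fin.prod_univ_eq_prod_range (fun k => if k < j then a else b) n]
  obtain ⟨d, rfl⟩ := Nat.exists_eq_add_of_le hj
  rw [Finset.prod_range_add]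
  congr 1
  · rw [Finset.prod_congr rfl (g := fun _ => a)]
    · simp
    · intro x hx; simp at hx; simp [hx]
  · simp

lemma sum_two (n j : ℕ) (hj : j ≤ n) (a b : ℝ) :
    ∑ k : Fin n, (if (k : ℕ) < j then a else b) = j * a + (n - j : ℕ) * b := by
  have := prod_two (A := Multiplicative ℝ) n j hj (Multiplicative.ofAdd a) (Multiplicative.ofAdd b)
  have h2 := congrArg Multiplicative.toAdd this
  simpa [toAdd_prod, apply_ite Multiplicative.toAdd] using h2

lemma dl_zero {β : Type*} [Fintype β] {Q : β → ℝ} (hQ1 : ∑ b, Q b = 1) :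
    dl Q (fun _ => (0 : E)) = 1 := by
  simp [dl, X_zero, ← Finset.sum_smul, hQ1]

/-- exchangeability, embedded version -/
lemma exch' (hV : Subl V) {β : Type*} [Fintype β] (n j : ℕ) (hn : 0 < n) (hj : j ≤ n) {Q : β → ℝ}
    (hQ : ∀ b, 0 ≤ Q b) (hQ1 : ∑ b, Q b = 1) (f : β → E) :
    LE' V (dl Q (fun a => ((j:ℝ) / n) • f a) ^ n) (dl Q f ^ j) := by
  have := exch hV n hn hQ f (fun k => if (k:ℕ) < j then 1 else 0)
  rw [sum_two n j hj] at this
  have h2 : ∀ k : Fin n, dl Q (fun a => (if (k:ℕ) < j then (1:ℝ) else 0) • f a) =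
    if (k:ℕ) < j then dl Q f else 1 := by
    intro k; split_ifs
    · simp
    · simp [dl_zero hQ1]
  simp only [h2, prod_two n j hj] at this
  simpa using this

end alg
end PMDaux

set_option linter.all false
namespace PMDaux
section claims
variable {E : Type*} [AddCommGroup E] [Module ℝ E] {V : E → ℝ}
variable {β : Type*} [Fintype β] {Q : β → ℝ}

lemma pow_as_prod (n j : ℕ) (hj : j ≤ n) (hQ1 : ∑ b, Q b = 1) (f : β → E) :
    dl Q f ^ j = ∏ k : Fin n, dl Q (fun a => (if (k:ℕ) < j then (1:ℝ) else 0) • f a) := by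
  have h2 : ∀ k : Fin n, dl Q (fun a => (if (k:ℕ) < j then (1:ℝ) else 0) • f a) =
    if (k:ℕ) < j then dl Q f else 1 := by
    intro k; split_ifs
    · simp
    · simp [dl_zero hQ1]
  simp only [h2, prod_two n j hj]
  simp

lemma X_nsmul (n : ℕ) (e : E) : X ((n:ℝ) • e) = X e ^ n := by
  induction n with
  | zero => simp [X_zero]
  | succ k ih => rw [pow_succ, ← ih, ← X_add]; congr 1; push_cast; rw [add_smul, one_smul]

noncomputable def mean (Q : β → ℝ) (f : β → E) : E := ∑ b, Q b • f b

lemma mean_neg (f : β → E) : mean Q (fun a => - f a) = - mean Q f := by simp [mean]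

lemma jensen_pow (hV : Subl V) (hQ : ∀ b, 0 ≤ Q b) (hQ1 : ∑ b, Q b = 1) (f : β → E) (p : ℕ) :
    LE' V (X ((p:ℝ) • mean Q f)) (dl Q f ^ p) := by
  rw [X_nsmul]
  exact LE'.pow (Pos.X _) (Pos.dl hQ f) (jensen hV hQ hQ1 f) p

noncomputable def th (V : E → ℝ) (Q : β → ℝ) (M : ℕ) (g : β → E) : ℝ :=
  phi V (X ((M:ℝ) • mean Q g) * dl Q (fun a => - g a) ^ M)

noncomputable def lam (V : E → ℝ) (Q : β → ℝ) (g : β → E) (p n : ℕ) : ℝ :=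
  phi V (dl Q g ^ p * dl Q (fun a => - g a) ^ n)

lemma lam_neg (g : β → E) (p n : ℕ) : lam V Q (fun a => - g a) p n = lam V Q g n p := by
  simp [lam, mul_comm]

lemma lam_lower (hV : Subl V) (hQ : ∀ b, 0 ≤ Q b) (hQ1 : ∑ b, Q b = 1) (g : β → E) (p n : ℕ) :
    phi V (X ((p:ℝ) • mean Q g) * dl Q (fun a => - g a) ^ n) ≤ lam V Q g p n :=
  (LE'.mul (Pos.X _) ((Pos.dl hQ _).pow n) (jensen_pow hV hQ hQ1 g p) (LE'.refl _)).phi_le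

lemma claim1 (hV : Subl V) (hQ : ∀ b, 0 ≤ Q b) (hQ1 : ∑ b, Q b = 1) (g : β → E) (M s : ℕ)
    (hM : 0 < M) (hs : s ≤ M) :
    ((2 * M - s : ℝ) / M) * th V Q M g ≤ lam V Q g (M + s) (M - s) + lam V Q g (M - s) (M + s) := by
  have hM' : (0:ℝ) < M := by exact_mod_cast hM
  have hs' : (s:ℝ) ≤ M := by exact_mod_cast hs
  have h1 := lam_lower hV hQ hQ1 g (M + s) (M - s)
  have h2 : phi V (X (((M:ℝ) - s - s) • mean Q g) * dl Q (fun a => - g a) ^ M) ≤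
      lam V Q g (M - s) (M + s) := by
    have a1 := jensen_pow hV hQ hQ1 (fun a => - g a) s
    have a2 := jensen_pow hV hQ hQ1 g (M - s)
    have a3 := LE'.mul (Pos.X _) ((Pos.dl hQ _).pow s) a2 a1
    have a4 := (LE'.mul ((Pos.X _).mul (Pos.X _)) ((Pos.dl hQ _).pow M) a3
      (LE'.refl (dl Q (fun a => - g a) ^ M))).phi_le
    refine le_trans (le_of_eq ?_) (a4.trans (le_of_eq ?_))
    · rw [← X_add, mean_neg, Nat.cast_sub hs]; congr 3; module
    · rw [lam, pow_add]; congr 1; ring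
  rw [pow_as_prod M (M - s) (Nat.sub_le _ _) hQ1, phi_prod] at h1
  rw [phi_pow] at h2
  refine le_trans ?_ (add_le_add h1 h2)
  rw [← Ex_add]
  have h3 : Ex M Q (fun z => V ((2 * M - s : ℝ) • mean Q g + ∑ k : Fin M,
      ((if (k:ℕ) < M - s then (1:ℝ) else 0) + 1) • (- g (z k)))) ≤ _ :=
    Ex_mono hQ (G := fun z => V (((M + s : ℕ) : ℝ) • mean Q g + ∑ k : Fin M,
      (if (k:ℕ) < M - s then (1:ℝ) else 0) • (- g (z k))) +
      V (((M:ℝ) - s - s) • mean Q g + ∑ k, - g (z k))) (fun z => by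
      refine le_trans (le_of_eq ?_) (hV.add _ _)
      congr 1
      simp only [add_smul, one_smul, Finset.sum_add_distrib]
      push_cast
      module)
  refine le_trans ?_ h3
  rw [← phi_prod M Q (fun k a => ((if (k:ℕ) < M - s then (1:ℝ) else 0) + 1) • (- g a))]
  refine le_trans ?_ (exch hV M hM hQ (fun a => - g a)
    (fun k : Fin M => (if (k:ℕ) < M - s then (1:ℝ) else 0) + 1) _)
  rw [Finset.sum_add_distrib, sum_two _ _ (Nat.sub_le _ _)]
  have h5 : (((M - s : ℕ) : ℝ) * 1 + ((M - (M - s) : ℕ) : ℝ) * 0 + ∑ k : Fin M, (1:ℝ)) =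
    2 * M - s := by rw [Nat.cast_sub hs]; simp; ring
  rw [h5, th, ← phi_homog hV M Q _ _ (div_nonneg (by linarith) hM'.le)]
  apply le_of_eq
  congr 3
  rw [smul_smul]; congr 1; field_simp

lemma Subl.mono_neg (hV : Subl V) {e : E} (he : V (-e) ≤ 0) {t t' : ℝ} (h : t ≤ t') (b : E) :
    V (b + t' • (-e)) ≤ V (b + t • (-e)) := by
  have := hV.add (b + t • (-e)) ((t' - t) • (-e))
  rw [hV.smul _ _ (by linarith)] at this
  have e2 : b + t • (-e) + (t' - t) • (-e) = b + t' • (-e) := by module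
  rw [e2] at this
  nlinarith

lemma claimA (hV : Subl V) (hQ : ∀ b, 0 ≤ Q b) (hQ1 : ∑ b, Q b = 1) (g : β → E) (M s : ℕ)
    (hM : 0 < M) (hs : s ≤ M) (hg : ∀ a, V (- g a) ≤ 0) :
    ((M + s : ℝ) / M) * th V Q M g ≤ lam V Q g (M + s) (M - s) := by
  have hM' : (0:ℝ) < M := by exact_mod_cast hM
  refine le_trans ?_ (lam_lower hV hQ hQ1 g (M + s) (M - s))
  refine le_trans ?_ (exch' hV M (M - s) hM (Nat.sub_le _ _) hQ hQ1 (fun a => - g a) _)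
  rw [th, ← phi_homog hV M Q _ _ (by positivity)]
  have : LE' V (dl Q (fun a => ((M + s : ℝ) / M) • (- g a)))
      (dl Q (fun a => (((M - s : ℕ) : ℝ) / M) • (- g a))) := by
    intro b
    rw [phi_dl, phi_dl]
    refine Finset.sum_le_sum fun a _ => mul_le_mul_of_nonneg_left ?_ (hQ a)
    refine hV.mono_neg (hg a) ?_ b
    rw [Nat.cast_sub hs]
    gcongr
    have : (0:ℝ) ≤ s := by positivity
    linarith
  refine le_trans (le_of_eq ?_) (LE'.pow (Pos.dl hQ _) (Pos.dl hQ _) this M _)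
  congr 3
  rw [smul_smul]; congr 1; push_cast; field_simp

lemma claimB (hV : Subl V) (hQ : ∀ b, 0 ≤ Q b) (hQ1 : ∑ b, Q b = 1) (g : β → E) (M s : ℕ)
    (hM : 0 < M) (hs : s ≤ M) {Δ : ℝ} (hg : ∀ a, V (g a) ≤ Δ) :
    ((M + s : ℝ) / M) * th V Q M (fun a => - g a) - 2 * s * Δ ≤ lam V Q g (M - s) (M + s) := by
  have hM' : (0:ℝ) < M := by exact_mod_cast hM
  rw [← lam_neg]
  refine le_trans ?_ (lam_lower hV hQ hQ1 (fun a => - g a) (M + s) (M - s))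
  refine le_trans ?_ (exch' hV M (M - s) hM (Nat.sub_le _ _) hQ hQ1 (fun a => - - g a) _)
  rw [th, ← phi_homog hV M Q _ _ (by positivity), phi_pow, phi_pow, sub_le_iff_le_add,
    ← Ex_const hQ1 (n := M) (2 * s * Δ), ← Ex_add]
  refine Ex_mono hQ fun z => ?_
  simp only [neg_neg]
  have h1 : ((M + s : ℝ) / M) • (M:ℝ) • mean Q (fun a => - g a) =
      ((M + s : ℕ) : ℝ) • mean Q (fun a => - g a) := by
    rw [smul_smul]; congr 1; push_cast; field_simp
  rw [h1]
  set b := ((M + s : ℕ) : ℝ) • mean Q (fun a => - g a)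
  have h2 : b + ∑ k, ((M + s : ℝ) / M) • g (z k) =
      (b + ∑ k, (((M - s : ℕ) : ℝ) / M) • g (z k)) + ((2 * s : ℝ) / M) • ∑ k, g (z k) := by
    rw [add_assoc, ← Finset.smul_sum, ← Finset.smul_sum, ← add_smul]
    congr 2
    rw [Nat.cast_sub hs]; ring
  rw [h2]
  refine (hV.add _ _).trans ?_
  rw [hV.smul _ _ (by positivity)]
  have h3 : V (∑ k, g (z k)) ≤ M * Δ := by
    refine (hV.sum _ _).trans ?_
    refine (Finset.sum_le_sum fun k _ => hg (z k)).trans ?_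
    simp
  have : (2 * s : ℝ) / M * V (∑ k, g (z k)) ≤ (2 * s : ℝ) / M * (M * Δ) :=
    mul_le_mul_of_nonneg_left h3 (by positivity)
  have e : (2 * s : ℝ) / M * (M * Δ) = 2 * s * Δ := by field_simp
  linarith

/-- bounds for powers of mean-zero element -/
lemma pow_le_small (hV : Subl V) (hQ : ∀ b, 0 ≤ Q b) (hQ1 : ∑ b, Q b = 1) (f : β → E)
    (hf : mean Q f = 0) (M s : ℕ) (hs : s ≤ M) :
    phi V (dl Q f ^ (M - s)) ≤ phi V (dl Q f ^ M) := by
  have h := jensen_pow hV hQ hQ1 f s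
  rw [hf, smul_zero, X_zero] at h
  have := ((Pos.dl hQ f).pow (M - s) _ _ h).phi_le
  rwa [mul_one, ← pow_add, Nat.sub_add_cancel hs] at this

lemma pow_le_big (hV : Subl V) (hQ : ∀ b, 0 ≤ Q b) (hQ1 : ∑ b, Q b = 1) (f : β → E)
    (M s : ℕ) (hM : 0 < M) :
    phi V (dl Q f ^ (M + s)) ≤ (M + s : ℝ) / M * phi V (dl Q f ^ M) := by
  have hM' : (0:ℝ) < M := by exact_mod_cast hM
  have h := (exch' hV (M + s) M (by omega) (by omega) hQ hQ1 f).phi_le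
  have h2 := phi_homog hV (M + s) Q f 0 (t := (M:ℝ) / (M + s : ℕ)) (by positivity)
  rw [smul_zero, X_zero, one_mul, one_mul] at h2
  rw [h2] at h
  push_cast at h
  have hms : (0:ℝ) < M + s := by positivity
  rw [div_mul_eq_mul_div, le_div_iff₀ hM']
  rw [div_mul_eq_mul_div, div_le_iff₀ hms] at h
  linarith

lemma phi_mul_le (hV : Subl V) (hQ : ∀ b, 0 ≤ Q b) (hQ1 : ∑ b, Q b = 1) (f f' : β → E)
    (p q : ℕ) : phi V (dl Q f ^ p * dl Q f' ^ q) ≤ phi V (dl Q f ^ p) + phi V (dl Q f' ^ q) := by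
  have e : ∀ (n) (f : β → E) , dl Q f ^ n = ∑ z : Fin n → β, (∏ k, Q (z k)) • X (∑ k, f (z k)) := by
    intro n f; rw [← prod_dl n Q (fun _ => f)]; simp
  have hc : ∀ n (t : ℝ), ∑ z : Fin n → β, (∏ k, Q (z k)) * t = t := fun n t => Ex_const hQ1 t
  have e1 : ∀ n (f : β → E), phi V (dl Q f ^ n) = Ex n Q (fun z => V (∑ k, f (z k))) := by
    intro n f
    have := phi_pow (V := V) n Q f 0
    simpa [X_zero] using this
  have e2 : phi V (dl Q f ^ p * dl Q f' ^ q) =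
      Ex p Q (fun z => Ex q Q (fun z' => V (∑ k, f (z k) + ∑ k, f' (z' k)))) := by
    rw [e p f, Finset.sum_mul, map_sum]
    refine Finset.sum_congr rfl fun z _ => ?_
    rw [smul_mul_assoc, map_smul, phi_pow, smul_eq_mul]
  rw [e2, e1, e1]
  calc _ ≤ Ex p Q (fun z => V (∑ k, f (z k)) + Ex q Q (fun z' => V (∑ k, f' (z' k)))) := by
        refine Ex_mono hQ fun z => ?_
        rw [← Ex_const hQ1 (n := q) (V (∑ k, f (z k))), ← Ex_add]
        exact Ex_mono hQ fun z' => hV.add _ _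
    _ = _ := by rw [Ex_add, Ex_const hQ1]

end claims
end PMDaux

set_option linter.all false
namespace PMDaux

noncomputable def qM (M : ℕ) : ℝ := (Nat.centralBinom M : ℝ) / 4 ^ M

lemma qM_succ (n : ℕ) : qM (n + 1) = (2 * n + 1) / (2 * n + 2) * qM n := by
  have h := Nat.succ_mul_centralBinom_succ n
  have h' : ((n:ℝ) + 1) * Nat.centralBinom (n + 1) = 2 * (2 * n + 1) * Nat.centralBinom n := by
    exact_mod_cast h
  have hn : ((n:ℝ) + 1) ≠ 0 := by positivity
  have h2 : (Nat.centralBinom (n + 1) : ℝ) = 2 * (2 * n + 1) * Nat.centralBinom n / (n + 1) := by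
    field_simp; linarith
  unfold qM
  rw [h2, pow_succ]
  have : (2 * (n:ℝ) + 2) ≠ 0 := by positivity
  field_simp
  ring

lemma qM_pos (n : ℕ) : 0 < qM n := by
  unfold qM
  have := Nat.centralBinom_pos n
  positivity

lemma qM_bound (n : ℕ) (hn : 1 ≤ n) : qM n ^ 2 * (n + 0.3) ≤ 0.325 := by
  induction n, hn using Nat.le_induction with
  | base => simp [qM, Nat.centralBinom]; norm_num
  | succ n hn ih =>
    refine le_trans ?_ ih
    rw [qM_succ, mul_pow]
    have hn' : (1:ℝ) ≤ n := by exact_mod_cast hn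
    have : ((2 * (n:ℝ) + 1) / (2 * n + 2)) ^ 2 * ((n + 1 : ℕ) + 0.3) ≤ n + 0.3 := by
      rw [div_pow, div_mul_eq_mul_div, div_le_iff₀ (by positivity)]
      push_cast
      nlinarith
    have h2 : 0 ≤ qM n ^ 2 := by positivity
    nlinarith

lemma qM_bound' (n : ℕ) (hn : 1 ≤ n) : qM n ^ 2 * n ≤ 0.325 := by
  have := qM_bound n hn
  nlinarith [sq_nonneg (qM n)]

lemma u_rec (M n : ℕ) (hn : n ≤ 2 * M) : ((n + 1 : ℕ) : ℝ) * (Nat.choose (2 * M) (n + 1)) =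
    (2 * M - n) * Nat.choose (2 * M) n := by
  have := Nat.choose_succ_right_eq (2 * M) n
  have h2 : ((Nat.choose (2*M) (n+1) : ℕ) : ℝ) * ((n + 1 : ℕ) : ℝ) =
    (Nat.choose (2*M) n : ℕ) * ((2 * M - n : ℕ) : ℝ) := by exact_mod_cast this
  rw [Nat.cast_sub hn] at h2
  push_cast at h2 ⊢
  linarith

lemma absdev (M : ℕ) : ∑ n ∈ Finset.range (2 * M + 1), (Nat.choose (2 * M) n : ℝ) * |(n:ℝ) - M| =
    M * Nat.centralBinom M := by
  have e : 2 * M + 1 = M + (M + 1) := by ring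
  have h1 : ∑ n ∈ Finset.range M, (Nat.choose (2 * M) n : ℝ) * |(n:ℝ) - M| =
      M * Nat.centralBinom M / 2 := by
    have := Finset.sum_range_sub (fun n => (n:ℝ) * Nat.choose (2 * M) n) M
    simp only [Nat.cast_zero, zero_mul, sub_zero] at this
    rw [Nat.centralBinom, ← this, Finset.sum_div]
    refine Finset.sum_congr rfl fun n hn => ?_
    have hn := Finset.mem_range.1 hn
    rw [u_rec M n (by omega), abs_of_nonpos (by have : (n:ℝ) ≤ M := by exact_mod_cast hn.le
                                                linarith)]
    ring
  have h2 : ∑ s ∈ Finset.range (M + 1), (Nat.choose (2 * M) (M + s) : ℝ) * |((M + s : ℕ):ℝ) - M| =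
      M * Nat.centralBinom M / 2 := by
    have := Finset.sum_range_sub' (fun s => ((M + s : ℕ):ℝ) * Nat.choose (2 * M) (M + s)) (M + 1)
    rw [Nat.choose_eq_zero_of_lt (by omega : 2 * M < M + (M + 1))] at this
    simp only [Nat.cast_zero, mul_zero, sub_zero, add_zero] at this
    rw [Nat.centralBinom, ← this, Finset.sum_div]
    refine Finset.sum_congr rfl fun n hn => ?_
    have hn := Finset.mem_range.1 hn
    have := u_rec M (M + n) (by omega)
    rw [add_assoc] at this
    rw [this, abs_of_nonneg (by push_cast; simp)]
    push_cast
    ring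
  rw [e, Finset.sum_range_add, h1, h2]; ring

lemma sum_choose_real (M : ℕ) :
    ∑ n ∈ Finset.range (2 * M + 1), (Nat.choose (2 * M) n : ℝ) = 4 ^ M := by
  have := Nat.sum_range_choose (2 * M)
  have h : ((∑ n ∈ Finset.range (2 * M + 1), Nat.choose (2 * M) n : ℕ) : ℝ) = ((2 ^ (2 * M) : ℕ) : ℝ) := by
    rw [this]
  push_cast at h
  rw [h, pow_mul]; norm_num

/-- kappa -/
noncomputable def kap (M : ℕ) : ℝ := qM M / 2

lemma binsum (M : ℕ) (F : ℕ → ℝ) (a b : ℝ)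
    (h : ∀ s ≤ M, F (M + s) + F (M - s) ≤ a + b * s) :
    (∑ n ∈ Finset.range (2 * M + 1), (Nat.choose (2 * M) n : ℝ) * F n) / 4 ^ M
      ≤ a / 2 + b * M * kap M := by
  have hr : ∑ n ∈ Finset.range (2 * M + 1), (Nat.choose (2 * M) n : ℝ) * F n =
      ∑ n ∈ Finset.range (2 * M + 1), (Nat.choose (2 * M) n : ℝ) * F (2 * M - n) := by
    rw [← Finset.sum_range_reflect]
    refine Finset.sum_congr rfl fun n hn => ?_
    have hn := Finset.mem_range.1 hn
    have e : 2 * M + 1 - 1 - n = 2 * M - n := by omega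
    rw [e, Nat.choose_symm (by omega)]
  have h2 : 2 * ∑ n ∈ Finset.range (2 * M + 1), (Nat.choose (2 * M) n : ℝ) * F n ≤
      4 ^ M * a + b * (M * Nat.centralBinom M) := by
    rw [two_mul]
    nth_rewrite 2 [hr]
    rw [← sum_choose_real, ← absdev, ← Finset.sum_add_distrib, Finset.sum_mul, Finset.mul_sum,
      ← Finset.sum_add_distrib]
    refine Finset.sum_le_sum fun n hn => ?_
    have hn := Finset.mem_range.1 hn
    have hc : (0:ℝ) ≤ Nat.choose (2 * M) n := by positivity
    have key : F n + F (2 * M - n) ≤ a + b * |(n:ℝ) - M| := by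
      rcases le_total n M with hnm | hnm
      · have := h (M - n) (by omega)
        rw [show M + (M - n) = 2 * M - n by omega, show M - (M - n) = n by omega,
          Nat.cast_sub hnm] at this
        have hnm' : (n:ℝ) ≤ M := by exact_mod_cast hnm
        rw [abs_of_nonpos (by linarith)]
        linarith
      · have := h (n - M) (by omega)
        rw [show M + (n - M) = n by omega, show M - (n - M) = 2 * M - n by omega,
          Nat.cast_sub hnm] at this
        have hnm' : (M:ℝ) ≤ n := by exact_mod_cast hnm
        rw [abs_of_nonneg (by linarith)]
        linarith
    nlinarith
  rw [div_le_iff₀ (by positivity), kap, qM]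
  have e : (a / 2 + b * M * ((Nat.centralBinom M : ℝ) / 4 ^ M / 2)) * 4 ^ M =
    (4 ^ M * a + b * (M * Nat.centralBinom M)) / 2 := by
    have : (4:ℝ) ^ M ≠ 0 := by positivity
    field_simp
  rw [e]; linarith

end PMDaux

set_option linter.all false
namespace PMDaux
section mainineq
variable {E : Type*} [AddCommGroup E] [Module ℝ E] {V : E → ℝ}
variable {β : Type*} [Fintype β] {Q : β → ℝ}

lemma phi_binom (A B : AddMonoidAlgebra ℝ E) (M : ℕ) :
    phi V (((1/2:ℝ) • (A + B)) ^ (2 * M)) =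
      (∑ n ∈ Finset.range (2 * M + 1), (Nat.choose (2 * M) n : ℝ) *
        phi V (A ^ n * B ^ (2 * M - n))) / 4 ^ M := by
  rw [smul_pow, map_smul, add_pow, map_sum, smul_eq_mul, pow_mul]
  have : ((1/2:ℝ)^2)^M = 1 / 4 ^ M := by rw [← one_div_pow]; norm_num
  rw [this, one_div_mul_eq_div]
  congr 1
  refine Finset.sum_congr rfl fun n _ => ?_
  rw [mul_comm _ ((Nat.choose (2 * M) n : ℕ) : AddMonoidAlgebra ℝ E), ← nsmul_eq_mul, map_nsmul,
    nsmul_eq_mul]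

noncomputable def Qs (Q : β → ℝ) : β × Bool → ℝ := fun p => Q p.1 / 2
def xs (x : β → E) : β × Bool → E := fun p => if p.2 then x p.1 else - x p.1

lemma Qs_nonneg (hQ : ∀ b, 0 ≤ Q b) : ∀ p, 0 ≤ Qs Q p := fun p => by
  unfold Qs; linarith [hQ p.1]

lemma Qs_sum (hQ1 : ∑ b, Q b = 1) : ∑ p, Qs Q p = 1 := by
  simp [Qs, Fintype.sum_prod_type, mul_div_cancel₀, hQ1]

lemma xs_mean (x : β → E) : mean (Qs Q) (xs x) = 0 := by
  simp [mean, Qs, xs, Fintype.sum_prod_type]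

noncomputable def rad (V : E → ℝ) (Q : β → ℝ) (M : ℕ) (x : β → E) : ℝ :=
  phi V (dl (Qs Q) (xs x) ^ M)

lemma upper (hV : Subl V) (hQ : ∀ b, 0 ≤ Q b) (hQ1 : ∑ b, Q b = 1) (g x y : β → E)
    (hstep : ∀ b a, V (b + g a) + V (b - g a) ≤
      (1/2) * (V (b + x a) + V (b - x a) + V (b + y a) + V (b - y a)))
    (M : ℕ) (hM : 0 < M) :
    (∑ n ∈ Finset.range (2 * M + 1), (Nat.choose (2 * M) n : ℝ) * lam V Q g n (2 * M - n)) / 4 ^ M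
      ≤ (1 + kap M) * (rad V Q M x + rad V Q M y) := by
  have hM' : (0:ℝ) < M := by exact_mod_cast hM
  have hT : LE' V ((1/2:ℝ) • (dl Q g + dl Q (fun a => - g a)))
      ((1/2:ℝ) • (dl (Qs Q) (xs x) + dl (Qs Q) (xs y))) := by
    intro b
    simp only [mul_smul_comm, map_smul, mul_add, map_add, phi_dl]
    rw [Fintype.sum_prod_type, Fintype.sum_prod_type, ← Finset.sum_add_distrib,
      ← Finset.sum_add_distrib]
    simp only [smul_eq_mul]
    refine mul_le_mul_of_nonneg_left (Finset.sum_le_sum fun a _ => ?_) (by norm_num)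
    have := mul_le_mul_of_nonneg_left (hstep b a) (hQ a)
    simp [Qs, xs, ← sub_eq_add_neg]
    linarith
  have hp1 : Pos V ((1/2:ℝ) • (dl Q g + dl Q (fun a => - g a))) :=
    ((Pos.dl hQ _).add (Pos.dl hQ _)).smul (by norm_num)
  have hq := Qs_nonneg hQ
  have hq1 := Qs_sum hQ1
  have hp2 : Pos V ((1/2:ℝ) • (dl (Qs Q) (xs x) + dl (Qs Q) (xs y))) :=
    ((Pos.dl hq _).add (Pos.dl hq _)).smul (by norm_num)
  have h := (LE'.pow hp1 hp2 hT (2 * M)).phi_le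
  rw [phi_binom, phi_binom] at h
  refine h.trans ?_
  have h2 : (∑ n ∈ Finset.range (2 * M + 1), (Nat.choose (2 * M) n : ℝ) *
        phi V (dl (Qs Q) (xs x) ^ n * dl (Qs Q) (xs y) ^ (2 * M - n))) / 4 ^ M ≤
      (∑ n ∈ Finset.range (2 * M + 1), (Nat.choose (2 * M) n : ℝ) *
        (phi V (dl (Qs Q) (xs x) ^ n) + phi V (dl (Qs Q) (xs y) ^ (2 * M - n)))) / 4 ^ M := by
    gcongr
    exact phi_mul_le hV hq hq1 _ _ _ _
  refine h2.trans ?_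
  have hb : ∀ (x : β → E) (s : ℕ), s ≤ M → phi V (dl (Qs Q) (xs x) ^ (M + s)) +
      phi V (dl (Qs Q) (xs x) ^ (M - s)) ≤ 2 * rad V Q M x + (rad V Q M x / M) * s := by
    intro x s hs
    have h1 := pow_le_small hV hq hq1 (xs x) (xs_mean x) M s hs
    have h2 := pow_le_big hV hq hq1 (xs x) M s hM
    have e : (M + s : ℝ) / M * phi V (dl (Qs Q) (xs x) ^ M) = rad V Q M x + (rad V Q M x / M) * s := by
      unfold rad; field_simp
    unfold rad at *
    linarith
  refine (binsum M _ (2 * rad V Q M x + 2 * rad V Q M y) (rad V Q M x / M + rad V Q M y / M)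
    ?_).trans (le_of_eq ?_)
  · intro s hs
    have h1 := hb x s hs
    have h2 := hb y s hs
    rw [show 2 * M - (M + s) = M - s by omega, show 2 * M - (M - s) = M + s by omega]
    linarith
  · field_simp

lemma lower1 (hV : Subl V) (hQ : ∀ b, 0 ≤ Q b) (hQ1 : ∑ b, Q b = 1) (g : β → E)
    (M : ℕ) (hM : 0 < M) :
    (1 - kap M) * th V Q M g ≤
    (∑ n ∈ Finset.range (2 * M + 1), (Nat.choose (2 * M) n : ℝ) * lam V Q g n (2 * M - n)) / 4 ^ M := by
  have hM' : (0:ℝ) < M := by exact_mod_cast hM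
  have := binsum M (fun n => - lam V Q g n (2 * M - n)) (- 2 * th V Q M g) (th V Q M g / M) (by
    intro s hs
    have h := claim1 hV hQ hQ1 g M s hM hs
    simp only [show 2 * M - (M + s) = M - s by omega, show 2 * M - (M - s) = M + s by omega]
    have e : (2 * M - s : ℝ) / M * th V Q M g = 2 * th V Q M g - th V Q M g / M * s := by
      field_simp
    linarith)
  simp only [mul_neg, Finset.sum_neg_distrib, neg_div] at this
  have e : th V Q M g / M * M * kap M = th V Q M g * kap M := by field_simp
  rw [e] at this
  linarith

lemma lower2 (hV : Subl V) (hQ : ∀ b, 0 ≤ Q b) (hQ1 : ∑ b, Q b = 1) (g : β → E)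
    (M : ℕ) (hM : 0 < M) :
    (1 - kap M) * th V Q M (fun a => - g a) ≤
    (∑ n ∈ Finset.range (2 * M + 1), (Nat.choose (2 * M) n : ℝ) * lam V Q g n (2 * M - n)) / 4 ^ M := by
  refine (lower1 hV hQ hQ1 _ M hM).trans (le_of_eq ?_)
  congr 1
  rw [← Finset.sum_range_reflect]
  refine Finset.sum_congr rfl fun n hn => ?_
  have hn := Finset.mem_range.1 hn
  rw [lam_neg, show 2 * M + 1 - 1 - n = 2 * M - n by omega, Nat.choose_symm (by omega),
    show 2 * M - (2 * M - n) = n by omega]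

lemma lower3 (hV : Subl V) (hQ : ∀ b, 0 ≤ Q b) (hQ1 : ∑ b, Q b = 1) (g : β → E)
    (M : ℕ) (hM : 0 < M) {Δ : ℝ} (hg0 : ∀ a, V (- g a) ≤ 0) (hg : ∀ a, V (g a) ≤ Δ) :
    (1/2 + kap M) * (th V Q M g + th V Q M (fun a => - g a)) - 2 * kap M * M * Δ ≤
    (∑ n ∈ Finset.range (2 * M + 1), (Nat.choose (2 * M) n : ℝ) * lam V Q g n (2 * M - n)) / 4 ^ M := by
  have hM' : (0:ℝ) < M := by exact_mod_cast hM
  set t1 := th V Q M g with ht1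
  set t2 := th V Q M (fun a => - g a) with ht2
  have := binsum M (fun n => - lam V Q g n (2 * M - n)) (- (t1 + t2))
      (2 * Δ - (t1 + t2) / M) (by
    intro s hs
    have h := claimA hV hQ hQ1 g M s hM hs hg0
    have h' := claimB hV hQ hQ1 g M s hM hs hg
    simp only [show 2 * M - (M + s) = M - s by omega, show 2 * M - (M - s) = M + s by omega]
    rw [← ht1] at h
    rw [← ht2] at h'
    have e : ∀ t : ℝ, (M + s : ℝ) / M * t = t + t / M * s := by
      intro t; field_simp
    rw [e] at h h'
    rw [add_div]
    linarith)
  simp only [mul_neg, Finset.sum_neg_distrib, neg_div] at this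
  have e : (2 * Δ - (t1 + t2) / M) * M * kap M = 2 * Δ * M * kap M - (t1 + t2) * kap M := by field_simp
  rw [e] at this
  linarith

lemma th_le (hV : Subl V) (hQ : ∀ b, 0 ≤ Q b) (hQ1 : ∑ b, Q b = 1) (g : β → E)
    (M : ℕ) {Δ : ℝ} (hg : ∀ a b, V (g a - g b) ≤ Δ) : th V Q M g ≤ M * Δ := by
  rw [th, phi_pow, ← Ex_const hQ1 (n := M) (M * Δ)]
  refine Ex_mono hQ fun z => ?_
  have e : (M:ℝ) • mean Q g + ∑ k, - g (z k) = ∑ k : Fin M, ∑ a, Q a • (g a - g (z k)) := by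
    simp [smul_sub, Finset.sum_sub_distrib, ← Finset.sum_smul, hQ1, mean, Nat.cast_smul_eq_nsmul]
    abel
  rw [e]
  have : ∀ k : Fin M, V (∑ a, Q a • (g a - g (z k))) ≤ Δ := by
    intro k
    refine (hV.sum _ _).trans ?_
    have : ∀ a, V (Q a • (g a - g (z k))) ≤ Q a * Δ := fun a => by
      rw [hV.smul _ _ (hQ a)]; exact mul_le_mul_of_nonneg_left (hg _ _) (hQ a)
    refine (Finset.sum_le_sum fun a _ => this a).trans ?_
    rw [← Finset.sum_mul, hQ1, one_mul]
  refine (hV.sum _ _).trans ((Finset.sum_le_sum fun k _ => this k).trans ?_)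
  simp

end mainineq
end PMDaux

set_option linter.all false
namespace PMDaux
section conc
variable {β : Type*} [Fintype β] {Q : β → ℝ}

open MeasureTheory in
lemma hoeff (hQ : ∀ b, 0 ≤ Q b) (hQ1 : ∑ b, Q b = 1) (f : β → ℝ) (c l : ℝ) (hc : 0 ≤ c)
    (hf : ∀ a b, f a - f b ≤ c) :
    ∑ a, Q a * Real.exp (l * f a) ≤ Real.exp (l * ∑ a, Q a * f a + l ^ 2 * c ^ 2 / 8) := by
  letI : MeasurableSpace β := ⊤
  have hne : Nonempty β := by
    by_contra h
    rw [not_nonempty_iff] at h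
    simp at hQ1
  obtain ⟨b0, hb0⟩ := Finite.exists_min f
  let μ : Measure β := ∑ a, ENNReal.ofReal (Q a) • Measure.dirac a
  have hint : ∀ h : β → ℝ, ∫ a, h a ∂μ = ∑ a, Q a * h a := by
    intro h
    rw [integral_finsetSum_measure]
    · refine Finset.sum_congr rfl fun a _ => ?_
      rw [integral_smul_measure, integral_dirac, ENNReal.toReal_ofReal (hQ a), smul_eq_mul]
    · intro a _
      exact (integrable_dirac (by simp)).smul_measure ENNReal.ofReal_ne_top
  have hμ : IsProbabilityMeasure μ := ⟨by
    simp only [μ, Measure.coe_finsetSum, Finset.sum_apply, Measure.smul_apply, measure_univ, smul_eq_mul, mul_one]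
    rw [← ENNReal.ofReal_sum_of_nonneg (fun a _ => hQ a), hQ1, ENNReal.ofReal_one]⟩
  have key := ProbabilityTheory.hasSubgaussianMGF_of_mem_Icc (μ := μ) (X := f) (a := f b0)
    (b := f b0 + c) (measurable_of_finite f).aemeasurable
    (Filter.Eventually.of_forall fun a => ⟨hb0 a, by linarith [hf a b0]⟩)
  have h2 := key.mgf_le l
  rw [ProbabilityTheory.mgf, hint, hint] at h2
  have h3 := mul_le_mul_of_nonneg_left h2 (Real.exp_pos (l * ∑ a, Q a * f a)).le
  rw [← Real.exp_add, Finset.mul_sum] at h3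
  refine le_trans (le_of_eq ?_) (h3.trans (le_of_eq ?_))
  · refine Finset.sum_congr rfl fun a _ => ?_
    rw [mul_left_comm, ← Real.exp_add]
    congr 2; ring
  · congr 2
    simp [abs_of_nonneg hc]
    ring

lemma Ex_succ (n : ℕ) (F : (Fin (n+1) → β) → ℝ) :
    Ex (n+1) Q F = ∑ a, Q a * Ex n Q (fun z => F (Fin.cons a z)) := by
  unfold Ex
  rw [← (Fin.consEquiv (fun _ => β)).sum_comp, Fintype.sum_prod_type]
  refine Finset.sum_congr rfl fun a _ => ?_
  rw [Finset.mul_sum]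
  refine Finset.sum_congr rfl fun z _ => ?_
  simp [Fin.consEquiv, Fin.prod_univ_succ, mul_assoc]

lemma Ex_sub_le (hQ : ∀ b, 0 ≤ Q b) (hQ1 : ∑ b, Q b = 1) {n : ℕ} {F G : (Fin n → β) → ℝ} {c : ℝ}
    (h : ∀ z, F z - G z ≤ c) : Ex n Q F - Ex n Q G ≤ c := by
  have := Ex_mono hQ (F := F) (G := fun z => c + G z) (fun z => by linarith [h z])
  rw [Ex_add, Ex_const hQ1] at this
  linarith

lemma mcd (hQ : ∀ b, 0 ≤ Q b) (hQ1 : ∑ b, Q b = 1) (c l : ℝ) (hc : 0 ≤ c) (n : ℕ)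
    (F : (Fin n → β) → ℝ) (hF : ∀ z k a, F (Function.update z k a) - F z ≤ c) :
    Ex n Q (fun z => Real.exp (l * F z)) ≤ Real.exp (l * Ex n Q F + n * (l ^ 2 * c ^ 2 / 8)) := by
  induction n with
  | zero => simp [Ex]
  | succ n ih =>
    rw [Ex_succ, Ex_succ]
    have h1 : ∀ a, Ex n Q (fun z => Real.exp (l * F (Fin.cons a z))) ≤
        Real.exp (n * (l ^ 2 * c ^ 2 / 8)) * Real.exp (l * Ex n Q (fun z => F (Fin.cons a z))) := by
      intro a
      rw [← Real.exp_add, add_comm ((n:ℝ) * _)]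
      refine ih _ fun z k b => ?_
      rw [Fin.cons_update]; exact hF _ _ _
    refine (Finset.sum_le_sum fun a _ => mul_le_mul_of_nonneg_left (h1 a) (hQ a)).trans ?_
    simp only [mul_left_comm (Q _)]
    rw [← Finset.mul_sum]
    have h2 := hoeff hQ hQ1 (fun a => Ex n Q (fun z => F (Fin.cons a z))) c l hc (by
      intro a b
      refine Ex_sub_le hQ hQ1 fun z => ?_
      have := hF (Fin.cons b z) 0 a
      rwa [Fin.update_cons_zero] at this)
    refine (mul_le_mul_of_nonneg_left h2 (Real.exp_pos _).le).trans (le_of_eq ?_)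
    rw [← Real.exp_add]; congr 1; push_cast; ring

variable {Q' : β → ℝ}

lemma tail2 (hQ : ∀ b, 0 ≤ Q b) (hQ1 : ∑ b, Q b = 1) (hQ' : ∀ b, 0 ≤ Q' b) (hQ1' : ∑ b, Q' b = 1)
    (c B : ℝ) (hc : 0 < c) (M : ℕ) (hM : 0 < M) (F : (Fin M → β) → (Fin M → β) → ℝ)
    (hF : ∀ S S' k a, F (Function.update S k a) S' - F S S' ≤ c)
    (hF' : ∀ S S' k a, F S (Function.update S' k a) - F S S' ≤ c)
    (hB : Ex M Q (fun S => Ex M Q' (F S)) ≤ B) :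
    Ex M Q (fun S => Ex M Q' (fun S' => if B < F S S' then 1 else 0)) ≤
      Real.exp (- (B - Ex M Q (fun S => Ex M Q' (F S))) ^ 2 / (M * c ^ 2)) := by
  have hM' : (0:ℝ) < M := by exact_mod_cast hM
  set m := Ex M Q (fun S => Ex M Q' (F S)) with hm
  set l := 2 * (B - m) / (M * c ^ 2) with hl
  have hl0 : 0 ≤ l := by
    have : 0 ≤ B - m := by linarith
    positivity
  have h1 : Ex M Q (fun S => Ex M Q' (fun S' => if B < F S S' then 1 else 0)) ≤
      Ex M Q (fun S => Ex M Q' (fun S' => Real.exp (-l * B) * Real.exp (l * F S S'))) := by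
    refine Ex_mono hQ fun S => Ex_mono hQ' fun S' => ?_
    rw [← Real.exp_add]
    split_ifs with h
    · apply Real.one_le_exp; nlinarith
    · positivity
  refine h1.trans ?_
  simp only [Ex_mul]
  have h2 : Ex M Q (fun S => Ex M Q' (fun S' => Real.exp (l * F S S'))) ≤
      Real.exp (M * (l ^ 2 * c ^ 2 / 8)) * Ex M Q (fun S => Real.exp (l * Ex M Q' (F S))) := by
    rw [← Ex_mul]
    refine Ex_mono hQ fun S => ?_
    rw [← Real.exp_add, add_comm]
    exact mcd hQ' hQ1' c l hc.le M (F S) (hF' S)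
  have h3 := mcd hQ hQ1 c l hc.le M (fun S => Ex M Q' (F S)) (fun S k a =>
    Ex_sub_le hQ' hQ1' fun S' => hF S S' k a)
  rw [← hm] at h3
  have h4 : Real.exp (-l * B) * Ex M Q (fun S => Ex M Q' (fun S' => Real.exp (l * F S S'))) ≤
      Real.exp (-l * B) * (Real.exp (M * (l ^ 2 * c ^ 2 / 8)) *
        Real.exp (l * m + M * (l ^ 2 * c ^ 2 / 8))) := by
    gcongr
    exact h2.trans (by gcongr)
  refine h4.trans (le_of_eq ?_)
  rw [← Real.exp_add, ← Real.exp_add]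
  congr 1
  rw [hl]; field_simp; ring

end conc
end PMDaux

set_option linter.all false
namespace PMDaux

lemma exp_ub (x r : ℝ) (h0 : 0 ≤ x) (h1 : x ≤ 2)
    (h : (1 + x/2 + (x/2)^2/2 + (x/2)^3/6 + (x/2)^4/24 + (x/2)^5/120 + (x/2)^6 * 7 / (720 * 6))^2 ≤ r) :
    Real.exp x ≤ r := by
  have hb := Real.exp_bound' (x := x/2) (by linarith) (by linarith) (n := 6) (by norm_num)
  have e : Real.exp x = Real.exp (x/2) ^ 2 := by rw [← Real.exp_nat_mul]; congr 1; push_cast; ring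
  rw [e]
  refine le_trans ?_ h
  apply pow_le_pow_left₀ (Real.exp_pos _).le
  refine hb.trans (le_of_eq ?_)
  simp only [Finset.sum_range_succ, Finset.sum_range_zero, Nat.factorial]
  push_cast
  ring

lemma tau0 : Real.sqrt (2 * Real.log 4) ≤ 1.666 ∧ 1.664 ≤ Real.sqrt (2 * Real.log 4) ∧
    Real.sqrt (2 * Real.log 4) ^ 2 = 2 * Real.log 4 := by
  have e : Real.log 4 = 2 * Real.log 2 := by
    rw [show (4:ℝ) = 2 ^ 2 by norm_num, Real.log_pow]; norm_num
  have h1 := Real.log_two_gt_d9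
  have h2 := Real.log_two_lt_d9
  refine ⟨?_, ?_, ?_⟩
  · rw [Real.sqrt_le_left (by norm_num), e]; norm_num at *; linarith
  · apply Real.le_sqrt_of_sq_le; rw [e]; norm_num at *; linarith
  · apply Real.sq_sqrt; rw [e]; linarith

lemma core_step (p q p1 q1 r1 r2 τ : ℝ) (hp : 0 ≤ p) (hp1 : p ≤ p1) (hq : 0 ≤ q) (hq1 : q ≤ q1)
    (hq2 : q1 ≤ 0.8) (hτ : Real.sqrt (2 * Real.log 4) ≤ τ)
    (h1 : Real.exp (p1 ^ 2) ≤ r1) (h2 : Real.exp (3.332 * q1 - q1 ^ 2) ≤ r2) (hr : r1 + r2 / 4 ≤ 4) :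
    Real.exp (-(τ - p)^2) + Real.exp (-(τ - q)^2) ≤ 4 * Real.exp (-τ^2/2) := by
  obtain ⟨t1, t2, t3⟩ := tau0
  set t := Real.sqrt (2 * Real.log 4)
  have a1 : Real.exp (-(τ - p)^2) ≤ r1 * Real.exp (-τ^2/2) := by
    have : Real.exp (-(τ - p)^2) ≤ Real.exp (p1 ^ 2) * Real.exp (-τ^2/2) := by
      rw [← Real.exp_add]
      apply Real.exp_le_exp.2
      nlinarith [sq_nonneg (τ - 2 * p)]
    exact this.trans (mul_le_mul_of_nonneg_right h1 (Real.exp_pos _).le)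
  have a2 : Real.exp (-(τ - q)^2) ≤ (r2 / 4) * Real.exp (-τ^2/2) := by
    have e4 : r2 / 4 = r2 * Real.exp (- Real.log 4) := by
      rw [Real.exp_neg, Real.exp_log (by norm_num)]; ring
    have : Real.exp (-(τ - q)^2) ≤ Real.exp (3.332 * q1 - q1 ^ 2) * (Real.exp (- Real.log 4) * Real.exp (-τ^2/2)) := by
      rw [← Real.exp_add, ← Real.exp_add]
      apply Real.exp_le_exp.2
      have b1 : -τ^2/2 + 2 * τ * q ≤ -t^2/2 + 2 * t * q := by nlinarith
      have b2 : 2 * t * q ≤ 3.332 * q := by nlinarith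
      have b3 : 3.332 * q - q ^ 2 ≤ 3.332 * q1 - q1 ^ 2 := by nlinarith
      nlinarith
    rw [e4, mul_assoc]
    refine this.trans (mul_le_mul_of_nonneg_right h2 (by positivity))
  have := Real.exp_pos (-τ^2/2)
  nlinarith

lemma core (p q c τ : ℝ) (hq : 0 ≤ q) (hqp : q ≤ p) (hc0 : 0 ≤ c) (hc : c ^ 2 ≤ 1.3)
    (hpc : p + q / 2 ≤ c) (hτ : Real.sqrt (2 * Real.log 4) ≤ τ) :
    Real.exp (-(τ - p)^2) + Real.exp (-(τ - q)^2) ≤ 4 * Real.exp (-τ^2/2) := by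
  have hc1 : c ≤ 1.1402 := by nlinarith
  have hp : 0 ≤ p := hq.trans hqp
  rcases le_total q 0.05 with h | h
  · exact core_step p q 1.1402 0.05 3.675 1.18 τ hp (by linarith) hq h (by norm_num) hτ
      (exp_ub _ _ (by norm_num) (by norm_num) (by norm_num))
      (exp_ub _ _ (by norm_num) (by norm_num) (by norm_num)) (by norm_num)
  rcases le_total q 0.12 with h | h
  · exact core_step p q 1.1152 0.12 3.48 1.5 τ hp (by linarith) hq h (by norm_num) hτ
      (exp_ub _ _ (by norm_num) (by norm_num) (by norm_num))
      (exp_ub _ _ (by norm_num) (by norm_num) (by norm_num)) (by norm_num)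
  rcases le_total q 0.3 with h | h
  · exact core_step p q 1.0802 0.3 3.23 2.5 τ hp (by linarith) hq h (by norm_num) hτ
      (exp_ub _ _ (by norm_num) (by norm_num) (by norm_num))
      (exp_ub _ _ (by norm_num) (by norm_num) (by norm_num)) (by norm_num)
  rcases le_total q 0.5 with h | h
  · exact core_step p q 0.9902 0.5 2.7 4.2 τ hp (by linarith) hq h (by norm_num) hτ
      (exp_ub _ _ (by norm_num) (by norm_num) (by norm_num))
      (exp_ub _ _ (by norm_num) (by norm_num) (by norm_num)) (by norm_num)
  rcases le_total q 0.62 with h | h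
  · exact core_step p q 0.8902 0.62 2.22 5.4 τ hp (by linarith) hq h (by norm_num) hτ
      (exp_ub _ _ (by norm_num) (by norm_num) (by norm_num))
      (exp_ub _ _ (by norm_num) (by norm_num) (by norm_num)) (by norm_num)
  have hp2 : p ≤ 0.8302 := by linarith
  have key : ∀ r : ℝ, 0 ≤ r → r ≤ p → Real.exp (-(τ - r)^2) ≤ 2 * Real.exp (-τ^2/2) := by
    intro r hr hrp
    have : Real.exp (-(τ - r)^2) ≤ Real.exp (Real.log 2) * Real.exp (-τ^2/2) := by
      rw [← Real.exp_add]
      apply Real.exp_le_exp.2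
      have h1 := Real.log_two_gt_d9
      have : r ^ 2 ≤ 0.6931 := by nlinarith
      norm_num at h1 this
      nlinarith [sq_nonneg (τ - 2 * r)]
    rwa [Real.exp_log (by norm_num)] at this
  linarith [key p hp le_rfl, key q hq hqp]

lemma core2 (a b c τ : ℝ) (hab : b ≤ a) (hc0 : 0 ≤ c) (hc : c ^ 2 ≤ 1.3) (hac : a ≤ c)
    (h : 0 ≤ b → a + b / 2 ≤ c) (hτ : Real.sqrt (2 * Real.log 4) ≤ τ) :
    Real.exp (-(τ - a)^2) + Real.exp (-(τ - b)^2) ≤ 4 * Real.exp (-τ^2/2) := by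
  have hc1 : c ≤ 1.1402 := by nlinarith
  have ht := tau0.2.1
  have hτ1 : 1.664 ≤ τ := ht.trans hτ
  have mono : ∀ r : ℝ, r ≤ c → Real.exp (-(τ - r)^2) ≤ Real.exp (-(τ - max r 0)^2) := by
    intro r hr
    apply Real.exp_le_exp.2
    rcases le_total r 0 with h | h
    · rw [max_eq_right h]; nlinarith
    · rw [max_eq_left h]
  refine (add_le_add (mono a hac) (mono b (hab.trans hac))).trans ?_
  refine core _ _ c τ (le_max_right _ _) (max_le_max_right _ hab) hc0 hc ?_ hτ
  rcases le_total b 0 with hb | hb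
  · rw [max_eq_right hb]; simp [hac, hc0]
  · rw [max_eq_left hb, max_eq_left (hb.trans hab)]; exact h hb

lemma final_num (κ w A Ep Em Δ τ : ℝ) (hΔ : 0 < Δ) (hw : 0 < w) (hκ0 : 0 ≤ κ)
    (hκ : (4 * κ * w) ^ 2 ≤ 1.3)
    (h1 : (1 - κ) * Ep ≤ (1 + κ) * A) (h2 : (1 - κ) * Em ≤ (1 + κ) * A)
    (h3 : (1/2 + κ) * (Ep + Em) - 4 * κ * Δ ≤ (1 + κ) * A) (h4 : Ep ≤ 2 * Δ) (h5 : Em ≤ 2 * Δ)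
    (hτ : Real.sqrt (2 * Real.log 4) ≤ τ) :
    (Ep ≤ A + Δ * τ / w) ∧ (Em ≤ A + Δ * τ / w) ∧
    Real.exp (-(τ - w * (Ep - A) / Δ)^2) + Real.exp (-(τ - w * (Em - A) / Δ)^2)
      ≤ 4 * Real.exp (-τ^2/2) := by
  have b : ∀ x : ℝ, (1 - κ) * x ≤ (1 + κ) * A → x ≤ 2 * Δ → x - A ≤ 4 * κ * Δ := by
    intro x h h'
    rcases le_total x A with hx | hx
    · have : 0 ≤ 4 * κ * Δ := by positivity
      linarith
    · nlinarith
  have bb : ∀ x y : ℝ, (1 - κ) * x ≤ (1 + κ) * A →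
      (1/2 + κ) * (x + y) - 4 * κ * Δ ≤ (1 + κ) * A → y ≤ x → A ≤ y →
      (x - A) + (y - A) / 2 ≤ 4 * κ * Δ := by
    intro x y hx hxy hyx hy
    have e1 : 0 ≤ κ * (x - A) := mul_nonneg hκ0 (by linarith)
    have e2 : 0 ≤ κ * (y - A) := mul_nonneg hκ0 (by linarith)
    nlinarith
  have hwD : 0 < w / Δ := by positivity
  have cE : 4 * κ * w = (w / Δ) * (4 * κ * Δ) := by field_simp
  have c0 : 0 ≤ 4 * κ * w := by positivity
  have cE' : ∀ x, w * x / Δ = (w / Δ) * x := fun x => by ring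
  have g1 : ∀ x : ℝ, x - A ≤ 4 * κ * Δ → w * (x - A) / Δ ≤ 4 * κ * w := by
    intro x hx
    rw [cE, cE']; exact mul_le_mul_of_nonneg_left hx hwD.le
  have g2 : ∀ x y : ℝ, (A ≤ y → (x - A) + (y - A) / 2 ≤ 4 * κ * Δ) → 0 ≤ w * (y - A) / Δ →
      w * (x - A) / Δ + w * (y - A) / Δ / 2 ≤ 4 * κ * w := by
    intro x y h hy
    rw [cE'] at hy
    have hy' : A ≤ y := by
      by_contra hh
      push Not at hh
      nlinarith
    have := mul_le_mul_of_nonneg_left (h hy') hwD.le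
    rw [cE, cE', cE']
    linarith
  have hc1 : 4 * κ * w ≤ 1.1402 := by nlinarith
  have hτ1 : 1.664 ≤ τ := tau0.2.1.trans hτ
  have g3 : ∀ x : ℝ, x - A ≤ 4 * κ * Δ → x ≤ A + Δ * τ / w := by
    intro x hx
    have h := g1 x hx
    have h' : w * (x - A) / Δ ≤ τ := by linarith
    rw [div_le_iff₀ hΔ] at h'
    have : x - A ≤ Δ * τ / w := by rw [le_div_iff₀ hw]; linarith
    linarith
  refine ⟨g3 _ (b Ep h1 h4), g3 _ (b Em h2 h5), ?_⟩
  rcases le_total Em Ep with hle | hle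
  · refine core2 _ _ (4 * κ * w) τ ?_ c0 hκ (g1 _ (b Ep h1 h4)) (g2 Ep Em fun hA => bb _ _ h1 h3 hle hA) hτ
    gcongr
  · rw [add_comm]
    refine core2 _ _ (4 * κ * w) τ ?_ c0 hκ (g1 _ (b Em h2 h5)) (g2 Em Ep fun hA => bb _ _ h2 (by linarith) hle hA) hτ
    gcongr
end PMDaux

set_option linter.all false
namespace PMDaux
section fin
variable {E : Type*} [AddCommGroup E] [Module ℝ E] {V : E → ℝ}
variable {β : Type*} [Fintype β] {Q Q' : β → ℝ}

noncomputable def dev (Q : β → ℝ) (M : ℕ) (g : β → E) (S : Fin M → β) : E :=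
  (1 / (M:ℝ)) • ((M:ℝ) • mean Q g + ∑ k, - g (S k))

lemma dev_update (M : ℕ) (g : β → E) (S : Fin M → β) (k : Fin M) (a : β) :
    dev Q M g (Function.update S k a) = dev Q M g S + (1 / (M:ℝ)) • (g (S k) - g a) := by
  have : ∀ i, - g (Function.update S k a i) = - g (S i) + if i = k then g (S k) - g a else 0 := by
    intro i
    by_cases h : i = k
    · subst h; simp only [Function.update_self, if_true]; abel
    · simp [h]
  unfold dev
  simp only [this, Finset.sum_add_distrib, Finset.sum_ite_eq', Finset.mem_univ, if_true]
  rw [← add_assoc, smul_add _ (_ + _)]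

lemma Ex_dev (hV : Subl V) (M : ℕ) (g : β → E) :
    Ex M Q (fun S => V (dev Q M g S)) = th V Q M g / M := by
  rw [th, phi_pow, div_eq_inv_mul, ← one_div, ← Ex_mul]
  congr 1; ext S
  rw [dev, hV.smul _ _ (by positivity)]

lemma tailP (hV : Subl V) (hQ : ∀ b, 0 ≤ Q b) (hQ1 : ∑ b, Q b = 1) (hQ' : ∀ b, 0 ≤ Q' b)
    (hQ1' : ∑ b, Q' b = 1) (g : β → E) (M : ℕ) (hM : 0 < M) {Δ : ℝ} (hΔ : 0 < Δ)
    (hg : ∀ a b, V (g a - g b) ≤ Δ) (A τ : ℝ)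
    (hB : (th V Q M g + th V Q' M (fun a => - g a)) / M ≤ A + Δ * τ / Real.sqrt M) :
    Ex M Q (fun S => Ex M Q' (fun S' => if A + Δ * τ / Real.sqrt M <
      V (dev Q M g S + dev Q' M (fun a => - g a) S') then 1 else 0)) ≤
    Real.exp (-(τ - Real.sqrt M * ((th V Q M g + th V Q' M (fun a => - g a)) / M - A) / Δ)^2) := by
  have hM' : (0:ℝ) < M := by exact_mod_cast hM
  have hw : 0 < Real.sqrt M := Real.sqrt_pos.2 hM'
  have hw2 : Real.sqrt M ^ 2 = M := Real.sq_sqrt hM'.le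
  set w := Real.sqrt M
  set Ep := (th V Q M g + th V Q' M (fun a => - g a)) / M with hEp
  set B := A + Δ * τ / w with hBdef
  have hdiff : ∀ (u : E) (a b : β), V (u + (1 / (M:ℝ)) • (g a - g b)) - V u ≤ Δ / M := by
    intro u a b
    have h1 := hV.add u ((1 / (M:ℝ)) • (g a - g b))
    rw [hV.smul _ _ (by positivity)] at h1
    have h2 : 1 / (M:ℝ) * V (g a - g b) ≤ 1 / M * Δ :=
      mul_le_mul_of_nonneg_left (hg a b) (by positivity)
    rw [one_div_mul_eq_div (M:ℝ) Δ] at h2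
    linarith
  have hmean : Ex M Q (fun S => Ex M Q' (fun S' => V (dev Q M g S + dev Q' M (fun a => - g a) S')))
      ≤ Ep := by
    calc _ ≤ Ex M Q (fun S => Ex M Q' (fun S' => V (dev Q M g S) + V (dev Q' M (fun a => - g a) S'))) :=
          Ex_mono hQ fun S => Ex_mono hQ' fun S' => hV.add _ _
      _ = Ep := by
        simp only [Ex_add, Ex_const hQ1, Ex_const hQ1', Ex_dev hV]
        rw [hEp]; ring
  refine (tail2 hQ hQ1 hQ' hQ1' (Δ / M) B (by positivity) M hM
    (fun S S' => V (dev Q M g S + dev Q' M (fun a => - g a) S')) ?_ ?_ (hmean.trans hB)).trans ?_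
  · intro S S' k a
    rw [dev_update, add_right_comm]
    exact hdiff _ _ _
  · intro S S' k a
    rw [dev_update, ← add_assoc, show - g (S' k) - - g a = g a - g (S' k) by abel]
    exact hdiff _ _ _
  · apply Real.exp_le_exp.2
    set m := Ex M Q (fun S => Ex M Q' (fun S' => V (dev Q M g S + dev Q' M (fun a => - g a) S')))
    have e1 : (τ - w * (Ep - A) / Δ) ^ 2 = (B - Ep) ^ 2 * w ^ 2 / Δ ^ 2 := by
      rw [hBdef]; field_simp; ring
    have e2 : -(B - m) ^ 2 / (M * (Δ / M) ^ 2) = - ((B - m) ^ 2 * M / Δ ^ 2) := by field_simp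
    rw [e1, e2, hw2]
    apply neg_le_neg
    gcongr

lemma deviation (hV : Subl V) (hQ : ∀ b, 0 ≤ Q b) (hQ1 : ∑ b, Q b = 1) (hQ' : ∀ b, 0 ≤ Q' b)
    (hQ1' : ∑ b, Q' b = 1) (g x y : β → E) (M : ℕ) (hM : 0 < M) {Δ : ℝ} (hΔ : 0 < Δ)
    (hg0 : ∀ a, V (- g a) ≤ 0) (hg : ∀ a, V (g a) ≤ Δ)
    (hstep : ∀ b a, V (b + g a) + V (b - g a) ≤
      (1/2) * (V (b + x a) + V (b - x a) + V (b + y a) + V (b - y a)))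
    (δ : ℝ) (hδ0 : 0 < δ) (hδ1 : δ < 1) (A : ℝ)
    (hA : A = (rad V Q M x + rad V Q M y + (rad V Q' M x + rad V Q' M y)) / M) :
    Ex M Q (fun S => Ex M Q' (fun S' => if A + Δ * Real.sqrt (2 * Real.log (4 / δ) / M) <
      V (dev Q M g S + dev Q' M (fun a => - g a) S') then 1 else 0)) +
    Ex M Q (fun S => Ex M Q' (fun S' => if A + Δ * Real.sqrt (2 * Real.log (4 / δ) / M) <
      V (dev Q M (fun a => - g a) S + dev Q' M g S') then 1 else 0)) ≤ δ := by
  have hM' : (0:ℝ) < M := by exact_mod_cast hM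
  have hw : 0 < Real.sqrt M := Real.sqrt_pos.2 hM'
  have hw2 : Real.sqrt M ^ 2 = M := Real.sq_sqrt hM'.le
  have hlog : Real.log 4 ≤ Real.log (4 / δ) := by
    apply Real.log_le_log (by norm_num)
    rw [le_div_iff₀ hδ0]; linarith
  have hlog0 : 0 < Real.log 4 := Real.log_pos (by norm_num)
  have hsq : Δ * Real.sqrt (2 * Real.log (4 / δ) / M) =
      Δ * Real.sqrt (2 * Real.log (4 / δ)) / Real.sqrt M := by
    rw [Real.sqrt_div (by linarith)]; ring
  rw [hsq]
  set τ := Real.sqrt (2 * Real.log (4 / δ)) with hτ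
  have hτ2 : τ ^ 2 = 2 * Real.log (4 / δ) := Real.sq_sqrt (by linarith)
  have hτ0 : Real.sqrt (2 * Real.log 4) ≤ τ := Real.sqrt_le_sqrt (by linarith)
  have hδe : 4 * Real.exp (-τ^2/2) = δ := by
    rw [hτ2, show -(2 * Real.log (4 / δ))/2 = - Real.log (4/δ) by ring, Real.exp_neg,
      Real.exp_log (by positivity)]
    field_simp
  have hgg : ∀ a b, V (g a - g b) ≤ Δ := fun a b => by
    rw [sub_eq_add_neg]; exact (hV.add _ _).trans (by linarith [hg a, hg0 b])
  have hgg' : ∀ a b, V (- g a - - g b) ≤ Δ := fun a b => by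
    rw [show - g a - - g b = g b - g a by abel]; exact hgg _ _
  have u1 := upper hV hQ hQ1 g x y hstep M hM
  have u2 := upper hV hQ' hQ1' g x y hstep M hM
  have l1 := (lower1 hV hQ hQ1 g M hM).trans u1
  have l1' := (lower1 hV hQ' hQ1' g M hM).trans u2
  have l2 := (lower2 hV hQ hQ1 g M hM).trans u1
  have l2' := (lower2 hV hQ' hQ1' g M hM).trans u2
  have l3 := (lower3 hV hQ hQ1 g M hM hg0 hg).trans u1
  have l3' := (lower3 hV hQ' hQ1' g M hM hg0 hg).trans u2
  have t1 := th_le hV hQ hQ1 g M hgg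
  have t1' := th_le hV hQ' hQ1' g M hgg
  have t2 := th_le hV hQ hQ1 _ M hgg'
  have t2' := th_le hV hQ' hQ1' _ M hgg'
  set p1 := th V Q M g
  set p2 := th V Q' M g
  set n1 := th V Q M (fun a => - g a)
  set n2 := th V Q' M (fun a => - g a)
  set r1 := rad V Q M x + rad V Q M y
  set r2 := rad V Q' M x + rad V Q' M y
  have hq := qM_bound' M hM
  have hk : (4 * kap M * Real.sqrt M) ^ 2 ≤ 1.3 := by
    rw [mul_pow, hw2, kap]; norm_num at hq ⊢; nlinarith
  have sc : ∀ a b : ℝ, a ≤ b → a / M ≤ b / M := fun a b h => by gcongr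
  obtain ⟨f1, f2, f3⟩ := final_num (kap M) (Real.sqrt M) A ((p1 + n2) / M) ((n1 + p2) / M) Δ τ hΔ hw
    (by unfold kap; linarith [qM_pos M]) hk
    (by rw [hA, mul_div_assoc', mul_div_assoc']; apply sc; linarith)
    (by rw [hA, mul_div_assoc', mul_div_assoc']; apply sc; linarith)
    (by
      rw [hA, mul_div_assoc', ← add_div, mul_div_assoc']
      have e : 4 * kap M * Δ = (4 * kap M * M * Δ) / M := by field_simp
      rw [e, ← sub_div]; apply sc; linarith)
    (by rw [div_le_iff₀ hM']; linarith)
    (by rw [div_le_iff₀ hM']; linarith) hτ0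
  have a1 := tailP hV hQ hQ1 hQ' hQ1' g M hM hΔ hgg A τ f1
  have a2 := tailP hV hQ hQ1 hQ' hQ1' (fun a => - g a) M hM hΔ hgg' A τ (by simpa using f2)
  simp only [neg_neg] at a2
  rw [← hδe]
  exact (add_le_add a1 a2).trans f3
end fin
end PMDaux

set_option linter.all false
namespace PMDaux

def BF (ι : Type*) : Submodule ℝ (ι → ℝ) where
  carrier := {B | ∃ C, ∀ i, |B i| ≤ C}
  add_mem' := by
    rintro a b ⟨C, hC⟩ ⟨D, hD⟩
    exact ⟨C + D, fun i => (abs_add_le _ _).trans (add_le_add (hC i) (hD i))⟩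
  zero_mem' := ⟨0, fun i => by simp⟩
  smul_mem' := by
    rintro c a ⟨C, hC⟩
    refine ⟨|c| * C, fun i => ?_⟩
    simp only [Pi.smul_apply, smul_eq_mul, abs_mul]
    exact mul_le_mul_of_nonneg_left (hC i) (abs_nonneg _)

noncomputable def VS {ι : Type*} (B : BF ι) : ℝ := ⨆ i, B.1 i

lemma le_VS {ι : Type*} (B : BF ι) (i : ι) : B.1 i ≤ VS B := by
  obtain ⟨C, hC⟩ := B.2
  exact le_ciSup (f := B.1) ⟨C, by rintro _ ⟨i, rfl⟩; exact (abs_le.1 (hC i)).2⟩ i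

lemma VS_le {ι : Type*} [Nonempty ι] (B : BF ι) (C : ℝ) (h : ∀ i, B.1 i ≤ C) : VS B ≤ C := ciSup_le h

lemma VS_subl {ι : Type*} [Nonempty ι] : Subl (VS (ι := ι)) where
  add a b := VS_le _ _ fun i => add_le_add (le_VS a i) (le_VS b i)
  smul t a ht := by
    unfold VS
    rw [Real.mul_iSup_of_nonneg ht]
    rfl

lemma VS_step {ι : Type*} [Nonempty ι] (b g x y : BF ι)
    (h : ∀ i j, g.1 i - g.1 j ≤ (1/2) * |x.1 i - x.1 j| + (1/2) * |y.1 i - y.1 j|) :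
    VS (b + g) + VS (b - g) ≤
      (1/2) * (VS (b + x) + VS (b - x) + VS (b + y) + VS (b - y)) := by
  have key : ∀ (x : BF ι) i j, b.1 i + b.1 j + |x.1 i - x.1 j| ≤ VS (b + x) + VS (b - x) := by
    intro x i j
    have h1 : b.1 i + x.1 i ≤ VS (b + x) := le_VS (b + x) i
    have h2 : b.1 j + x.1 j ≤ VS (b + x) := le_VS (b + x) j
    have h3 : b.1 i - x.1 i ≤ VS (b - x) := le_VS (b - x) i
    have h4 : b.1 j - x.1 j ≤ VS (b - x) := le_VS (b - x) j
    rcases abs_cases (x.1 i - x.1 j) with ⟨e, _⟩ | ⟨e, _⟩ <;> rw [e] <;> linarith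
  have : VS (b + g) ≤ (1/2) * (VS (b + x) + VS (b - x) + VS (b + y) + VS (b - y)) - VS (b - g) := by
    refine VS_le _ _ fun i => ?_
    rw [le_sub_comm]
    refine VS_le _ _ fun j => ?_
    show b.1 j - g.1 j ≤ _ - (b.1 i + g.1 i)
    linarith [h i j, key x i j, key y i j]
  linarith

lemma sum_coe {ι κ : Type*} [Fintype κ] (f : κ → BF ι) (i : ι) : (∑ k, f k).1 i = ∑ k, (f k).1 i := by
  have : (∑ k, f k).1 = ∑ k, (f k).1 := by
    exact map_sum (BF ι).subtype f Finset.univ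
  rw [this, Finset.sum_apply]

lemma dev_coe {ι β : Type*} [Fintype β] (Q : β → ℝ) (M : ℕ) (hM : 0 < M) (g : β → BF ι)
    (S : Fin M → β) (i : ι) :
    (dev Q M g S).1 i = ∑ a, Q a * (g a).1 i - (1 / (M:ℝ)) * ∑ k, (g (S k)).1 i := by
  have hM' : (0:ℝ) < M := by exact_mod_cast hM
  have h1 : (mean Q g).1 i = ∑ a, Q a * (g a).1 i := sum_coe _ _
  have h2 : (∑ k, - g (S k)).1 i = - ∑ k, (g (S k)).1 i := by
    rw [sum_coe, ← Finset.sum_neg_distrib]; rfl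
  show (1 / (M:ℝ)) * ((M:ℝ) * (mean Q g).1 i + (∑ k, - g (S k)).1 i) = _
  rw [h1, h2]; field_simp; ring

lemma emp_sum {m n M : ℕ} (S : Fin M → Fin m × Fin n) (f : Fin m × Fin n → ℝ) :
    ∑ p, empDist S p * f p = (1 / (M:ℝ)) * ∑ k, f (S k) := by
  unfold empDist
  simp only [mul_assoc]
  rw [← Finset.mul_sum]
  congr 1
  rw [← Finset.sum_fiberwise (s := Finset.univ) (g := S)]
  refine Finset.sum_congr rfl fun p _ => ?_
  rw [Finset.sum_congr rfl (g := fun _ => f p)]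
  · simp
  · intro k hk; simp at hk; rw [hk]

lemma sSup_img {α ι : Type*} (H : Set α) (π : ι → α) (hπ : Set.range π = H) (h : α → ℝ) :
    sSup (h '' H) = ⨆ i, h (π i) := by
  rw [← hπ, ← Set.range_comp]; rfl

lemma rad_eq {m n : ℕ} {ι : Type*} [Nonempty ι] (M : ℕ) (hM : 0 < M) (P : Fin m × Fin n → ℝ)
    (H : Set (Fin m → Fin n → ℝ)) (π : ι → (Fin m → Fin n → ℝ)) (hπ : Set.range π = H)
    (L : ℝ) (hL : 0 < L) (x : Fin m × Fin n → BF ι)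
    (hx : ∀ p i, (x p).1 i = 2 * L * π i p.1 p.2) :
    rad VS P M x = M * (2 * L * matRademacher M P H) := by
  have hM' : (0:ℝ) < M := by exact_mod_cast hM
  have h0 := phi_pow (V := VS) M (Qs P) (xs x) 0
  rw [X_zero, one_mul] at h0
  rw [rad, h0, matRademacher, rademacher, Ex, ← (Equiv.arrowProdEquivProdArrow (Fin M) (fun _ => Fin m × Fin n) (fun _ => Bool)).symm.sum_comp,
    Fintype.sum_prod_type, Finset.mul_sum, Finset.mul_sum]
  refine Finset.sum_congr rfl fun S _ => ?_
  rw [Finset.mul_sum, Finset.mul_sum, Finset.mul_sum]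
  refine Finset.sum_congr rfl fun σ _ => ?_
  have e1 : ∏ k, Qs P ((Equiv.arrowProdEquivProdArrow (Fin M) (fun _ => Fin m × Fin n) (fun _ => Bool)).symm (S, σ) k) =
      (∏ k, P (S k)) * ((1:ℝ)/2)^M := by
    simp [Qs, Equiv.arrowProdEquivProdArrow, div_eq_mul_inv, Finset.prod_mul_distrib]
  rw [e1, Set.image_image, sSup_img H π hπ]
  have e2 : VS (0 + ∑ k, xs x ((Equiv.arrowProdEquivProdArrow (Fin M) (fun _ => Fin m × Fin n) (fun _ => Bool)).symm (S, σ) k)) =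
      (M * (2 * L)) * ⨆ i, 1 / (M:ℝ) * ∑ k, (if σ k then (1:ℝ) else -1) * π i (S k).1 (S k).2 := by
    rw [Real.mul_iSup_of_nonneg (by positivity)]
    unfold VS
    congr 1; ext i
    rw [zero_add, sum_coe, Finset.mul_sum, Finset.mul_sum]
    refine Finset.sum_congr rfl fun k _ => ?_
    have hk : xs x ((Equiv.arrowProdEquivProdArrow (Fin M) (fun _ => Fin m × Fin n) (fun _ => Bool)).symm (S, σ) k) =
        xs x (S k, σ k) := rfl
    rw [hk]
    cases h : σ k
    · have h2 : xs x (S k, false) = - x (S k) := by simp [xs]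
      rw [h2]
      show - (x (S k)).1 i = _
      rw [hx]; simp; field_simp
    · have h2 : xs x (S k, true) = x (S k) := by simp [xs]
      rw [h2, hx]; simp; field_simp
  rw [e2]; ring

end PMDaux

theorem pmd_deviation_bound
    (m n : ℕ) (hm : 1 ≤ m) (hn : 1 ≤ n)
    (Δ : ℝ) (hΔ : 0 < Δ)
    (ℓ : ℝ → ℝ → ℝ) (hℓ : ∀ a b : ℝ, ℓ a b ∈ Set.Icc (0 : ℝ) Δ)
    (L : ℝ) (hL : 0 < L)
    (hLip1 : ∀ a a' b : ℝ, |ℓ a b - ℓ a' b| ≤ L * |a - a'|)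
    (hLip2 : ∀ a b b' : ℝ, |ℓ a b - ℓ a b'| ≤ L * |b - b'|)
    (H : Set (Fin m → Fin n → ℝ)) (hH : H.Nonempty)
    (hHb : ∃ C : ℝ, ∀ Rh ∈ H, ∀ u : Fin m, ∀ i : Fin n, |Rh u i| ≤ C)
    (P : Fin m × Fin n → ℝ) (hP0 : ∀ p, 0 ≤ P p)
    (hP1 : ∑ p : Fin m × Fin n, P p = 1)
    (P' : Fin m × Fin n → ℝ) (hP'0 : ∀ p, 0 ≤ P' p)
    (hP'1 : ∑ p : Fin m × Fin n, P' p = 1)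
    (M : ℕ) (hM : 1 ≤ M)
    (δ : ℝ) (hδ : δ ∈ Set.Ioo (0 : ℝ) 1) :
    1 - δ ≤ prSample2 M P P' (fun S S' =>
      ∀ Rhat ∈ H,
        |PMD ℓ H Rhat P P' - PMD ℓ H Rhat (empDist S) (empDist S')| ≤
          4 * L * (matRademacher M P H + matRademacher M P' H) +
            Δ * Real.sqrt (2 * Real.log (4 / δ) / M)) := by
  classical
  obtain ⟨C, hC⟩ := hHb
  have hM0 : 0 < M := hM
  have hneH : Nonempty ↥H := hH.to_subtype
  let ι := ↥H × ↥H
  have hC' : ∀ (i : ↥H) (p : Fin m × Fin n), |i.1 p.1 p.2| ≤ C := fun i p => hC i.1 i.2 p.1 p.2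
  let g : Fin m × Fin n → PMDaux.BF ι := fun p =>
    ⟨fun i => ℓ (i.1.1 p.1 p.2) (i.2.1 p.1 p.2), Δ, fun i => by
      have := hℓ (i.1.1 p.1 p.2) (i.2.1 p.1 p.2)
      rw [abs_of_nonneg this.1]; exact this.2⟩
  let x : Fin m × Fin n → PMDaux.BF ι := fun p =>
    ⟨fun i => 2 * L * i.1.1 p.1 p.2, 2 * L * C, fun i => by
      rw [abs_mul, abs_of_pos (by linarith : 0 < 2 * L)]
      exact mul_le_mul_of_nonneg_left (hC' _ _) (by linarith)⟩
  let y : Fin m × Fin n → PMDaux.BF ι := fun p =>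
    ⟨fun i => 2 * L * i.2.1 p.1 p.2, 2 * L * C, fun i => by
      rw [abs_mul, abs_of_pos (by linarith : 0 < 2 * L)]
      exact mul_le_mul_of_nonneg_left (hC' _ _) (by linarith)⟩
  have hr1 : Set.range (fun i : ι => i.1.1) = H := by
    ext R; constructor
    · rintro ⟨i, rfl⟩; exact i.1.2
    · intro h; exact ⟨(⟨R, h⟩, ⟨R, h⟩), rfl⟩
  have hr2 : Set.range (fun i : ι => i.2.1) = H := by
    ext R; constructor
    · rintro ⟨i, rfl⟩; exact i.2.2
    · intro h; exact ⟨(⟨R, h⟩, ⟨R, h⟩), rfl⟩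
  have radx : ∀ P : Fin m × Fin n → ℝ, PMDaux.rad PMDaux.VS P M x = M * (2 * L * matRademacher M P H) :=
    fun P => PMDaux.rad_eq M hM0 P H (fun i : ι => i.1.1) hr1 L hL x (fun p i => rfl)
  have rady : ∀ P : Fin m × Fin n → ℝ, PMDaux.rad PMDaux.VS P M y = M * (2 * L * matRademacher M P H) :=
    fun P => PMDaux.rad_eq M hM0 P H (fun i : ι => i.2.1) hr2 L hL y (fun p i => rfl)
  have hMr : (0:ℝ) < M := by exact_mod_cast hM0
  have main := PMDaux.deviation (V := PMDaux.VS (ι := ι)) PMDaux.VS_subl hP0 hP1 hP'0 hP'1 g x y M hM0 hΔ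
    (fun a => PMDaux.VS_le _ _ fun i => by
      show - ℓ _ _ ≤ 0
      linarith [(hℓ (i.1.1 a.1 a.2) (i.2.1 a.1 a.2)).1])
    (fun a => PMDaux.VS_le _ _ fun i => (hℓ _ _).2)
    (fun b a => PMDaux.VS_step b (g a) (x a) (y a) (by
      intro i j
      show ℓ (i.1.1 a.1 a.2) (i.2.1 a.1 a.2) - ℓ (j.1.1 a.1 a.2) (j.2.1 a.1 a.2) ≤
        (1/2) * |2 * L * i.1.1 a.1 a.2 - 2 * L * j.1.1 a.1 a.2| +
        (1/2) * |2 * L * i.2.1 a.1 a.2 - 2 * L * j.2.1 a.1 a.2|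
      have hk : ∀ u v : ℝ, |2 * L * u - 2 * L * v| = 2 * L * |u - v| := fun u v => by
        rw [← mul_sub, abs_mul, abs_of_pos (by linarith : 0 < 2 * L)]
      rw [hk, hk]
      have h1 := le_trans (le_abs_self _) (hLip1 (i.1.1 a.1 a.2) (j.1.1 a.1 a.2) (i.2.1 a.1 a.2))
      have h2 := le_trans (le_abs_self _) (hLip2 (j.1.1 a.1 a.2) (i.2.1 a.1 a.2) (j.2.1 a.1 a.2))
      linarith))
    δ hδ.1 hδ.2 (4 * L * (matRademacher M P H + matRademacher M P' H)) (by
      rw [radx, rady, radx, rady]; field_simp; ring)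
  set B := 4 * L * (matRademacher M P H + matRademacher M P' H) +
            Δ * Real.sqrt (2 * Real.log (4 / δ) / M) with hB
  -- coordinates of the deviations
  have co1 : ∀ S S' (i : ι), (PMDaux.dev P M g S + PMDaux.dev P' M (fun a => - g a) S').1 i =
      (wLoss ℓ P i.1.1 i.2.1 - wLoss ℓ P' i.1.1 i.2.1) -
      (wLoss ℓ (empDist S) i.1.1 i.2.1 - wLoss ℓ (empDist S') i.1.1 i.2.1) := by
    intro S S' i
    show (PMDaux.dev P M g S).1 i + (PMDaux.dev P' M (fun a => - g a) S').1 i = _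
    rw [PMDaux.dev_coe _ _ hM0, PMDaux.dev_coe _ _ hM0]
    unfold wLoss
    rw [PMDaux.emp_sum S (fun p => ℓ (i.1.1 p.1 p.2) (i.2.1 p.1 p.2)),
      PMDaux.emp_sum S' (fun p => ℓ (i.1.1 p.1 p.2) (i.2.1 p.1 p.2))]
    have n1 : ∑ a, P' a * (- g a).1 i = - ∑ a, P' a * (g a).1 i := by
      rw [← Finset.sum_neg_distrib]
      refine Finset.sum_congr rfl fun a _ => ?_
      show P' a * (- (g a).1 i) = _
      ring
    have n2 : ∑ k, (- g (S' k)).1 i = - ∑ k, (g (S' k)).1 i := by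
      rw [← Finset.sum_neg_distrib]; rfl
    rw [n1, n2]
    show _ = (∑ a, P a * (g a).1 i - ∑ a, P' a * (g a).1 i) -
      (1 / (M:ℝ) * ∑ k, (g (S k)).1 i - 1 / (M:ℝ) * ∑ k, (g (S' k)).1 i)
    ring
  have co2 : ∀ S S' (i : ι), (PMDaux.dev P M (fun a => - g a) S + PMDaux.dev P' M g S').1 i =
      - (PMDaux.dev P M g S + PMDaux.dev P' M (fun a => - g a) S').1 i := by
    intro S S' i
    have : PMDaux.dev P M (fun a => - g a) S + PMDaux.dev P' M g S' =
      - (PMDaux.dev P M g S + PMDaux.dev P' M (fun a => - g a) S') := by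
      simp only [PMDaux.dev, PMDaux.mean_neg, Finset.sum_neg_distrib]
      module
    rw [this]; rfl
  -- boundedness of the PMD image
  have wl : ∀ (W : Fin m × Fin n → ℝ) A A', |wLoss ℓ W A A'| ≤ ∑ p, |W p| * Δ := by
    intro W A A'
    unfold wLoss
    refine (Finset.abs_sum_le_sum_abs _ _).trans (Finset.sum_le_sum fun p _ => ?_)
    rw [abs_mul, abs_of_nonneg (hℓ _ _).1]
    exact mul_le_mul_of_nonneg_left (hℓ _ _).2 (abs_nonneg _)
  have bdd : ∀ (W W' : Fin m × Fin n → ℝ) A, BddAbove ((fun R' => wLoss ℓ W A R' - wLoss ℓ W' A R') '' H) := by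
    intro W W' A
    refine ⟨∑ p, |W p| * Δ + ∑ p, |W' p| * Δ, ?_⟩
    rintro _ ⟨R', _, rfl⟩
    have h1 := (abs_le.1 (wl W A R')).2
    have h2 := (abs_le.1 (wl W' A R')).1
    show wLoss ℓ W A R' - wLoss ℓ W' A R' ≤ _
    linarith
  have good : ∀ S S', PMDaux.VS (PMDaux.dev P M g S + PMDaux.dev P' M (fun a => - g a) S') ≤ B →
      PMDaux.VS (PMDaux.dev P M (fun a => - g a) S + PMDaux.dev P' M g S') ≤ B →
      ∀ Rhat ∈ H, |PMD ℓ H Rhat P P' - PMD ℓ H Rhat (empDist S) (empDist S')| ≤ B := by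
    intro S S' h1 h2 Rhat hR
    rw [abs_sub_le_iff]
    unfold PMD
    constructor
    · rw [sub_le_iff_le_add]
      refine csSup_le (hH.image _) ?_
      rintro _ ⟨R', hR', rfl⟩
      have e1 := le_csSup (bdd (empDist S) (empDist S') Rhat) ⟨R', hR', rfl⟩
      have e2 := (PMDaux.le_VS _ (⟨Rhat, hR⟩, ⟨R', hR'⟩)).trans h1
      rw [co1] at e2
      simp only at e1 e2 ⊢
      linarith
    · rw [sub_le_iff_le_add]
      refine csSup_le (hH.image _) ?_
      rintro _ ⟨R', hR', rfl⟩
      have e1 := le_csSup (bdd P P' Rhat) ⟨R', hR', rfl⟩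
      have e2 := (PMDaux.le_VS _ (⟨Rhat, hR⟩, ⟨R', hR'⟩)).trans h2
      rw [co2, co1] at e2
      simp only at e1 e2 ⊢
      linarith
  have pr : ∀ Ev : (Fin M → Fin m × Fin n) → (Fin M → Fin m × Fin n) → Prop,
      prSample2 M P P' Ev =
      PMDaux.Ex M P (fun S => PMDaux.Ex M P' (fun S' => if Ev S S' then 1 else 0)) := by
    intro Ev
    unfold prSample2 PMDaux.Ex
    refine Finset.sum_congr rfl fun S _ => ?_
    rw [Finset.mul_sum]
    refine Finset.sum_congr rfl fun S' _ => ?_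
    by_cases h : Ev S S' <;> simp [h]
  rw [pr]
  have one : PMDaux.Ex M P (fun S => PMDaux.Ex M P' (fun S' => (1:ℝ))) = 1 := by
    simp only [PMDaux.Ex_const hP'1, PMDaux.Ex_const hP1]
  have le : (1:ℝ) ≤ PMDaux.Ex M P (fun S => PMDaux.Ex M P' (fun S' =>
      (if ∀ Rhat ∈ H, |PMD ℓ H Rhat P P' - PMD ℓ H Rhat (empDist S) (empDist S')| ≤ B then (1:ℝ) else 0) +
      ((if B < PMDaux.VS (PMDaux.dev P M g S + PMDaux.dev P' M (fun a => - g a) S') then 1 else 0) +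
      (if B < PMDaux.VS (PMDaux.dev P M (fun a => - g a) S + PMDaux.dev P' M g S') then 1 else 0)))) := by
    refine one.symm.le.trans ?_
    refine PMDaux.Ex_mono hP0 fun S => PMDaux.Ex_mono hP'0 fun S' => ?_
    by_cases h1 : B < PMDaux.VS (PMDaux.dev P M g S + PMDaux.dev P' M (fun a => - g a) S')
    · rw [if_pos h1]; split_ifs <;> norm_num
    · by_cases h2 : B < PMDaux.VS (PMDaux.dev P M (fun a => - g a) S + PMDaux.dev P' M g S')
      · rw [if_pos h2]; split_ifs <;> norm_num
      · rw [if_pos (good S S' (not_lt.1 h1) (not_lt.1 h2))]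
        split_ifs; norm_num
  simp only [PMDaux.Ex_add] at le
  linarith
end
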